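/- Every signed bipartite planar simple graph (G, σ) has circular chromatic number strictly less than 4; that is, there exists ε > 0 (depending on (G, σ)) such that (G, σ) admits a circular (4 − ε)-coloring. -/

import Mathlib

/-!
A bipartite graph with parts `A` and `Aᶜ` has a circular `4`-coloring for every signature: use the
points `0, 2` on `A` and `1, 3` on `Aᶜ`. All edges are then tight, each in one direction only, so
a smaller circle suffices as soon as all vertices can be pushed slightly along the circle such
that every edge becomes slack (`hasCircularColoring`). Choosing between the two antipodal points
of a vertex amounts to a switching `s`, and the amounts of pushing form a height function `y`.
With a suitable antisymmetric weight `τ` encoding the signs, the requirement is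
`0 < τ u v * s u * s v * (y v - y u)` for all edges `uv`; such a pair `(s, y)` is called a solution
(`Sol`). Solutions are preserved when the lowest vertices are switched and moved to the top, so
that any vertex can be assumed to be lowest (`Sol.normalize`).

Solutions exist for all bipartite graphs without `K₃,₃` minor, by induction on the number of
vertices (`Good.exists_sol`); the induction allows one exceptional edge `pq` that may join vertices
of the same class. A vertex whose neighbours, except one, have equal heights can be inserted into a
solution (`Sol.extend`); this deals with degree at most two. Otherwise the edge bound `2n - 4` for
bipartite graphs without `K₃,₃` minor (`edge_bound`) gives a vertex `v` of degree three off the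
exceptional edge. If two neighbours `a, b` of `v` can be identified, possibly after switching one,
without creating parallel edges of opposite signs, then contract `a v b`, solve, and insert `v`.
If not, `a` and `b` have common neighbours `w₁, w₂` other than `v` such that the `4`-cycle
`a w₁ b w₂` is negative (the product of its weights taken from `a` and `b` is negative). Without
`K₃,₃` minor this cycle is separating (`HasK33.of_conn_compl`). Both sides are solved and glued: in
a solution with `a` lowest, the order of the vertices of a negative `4`-cycle is determined by the
signs of `a` and `b`, and the latter can be prescribed on one side by an additional edge `ab`, which
is the reason for allowing an exceptional edge (`Good.separate`).

Planar graphs have no `K₃,₃` minor (`not_hasK33_of_isPlanar`). The connected branch sets of a minor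
are drawn as path-connected sets, which yields a drawing of `K₃,₃` in which edges without common
end are disjoint. For two such edges `δ, ε` the map `(s, t) ↦ δ s - ε t` does not vanish on the
square, so its logarithm has total change zero around the boundary; summing over all pairs of
disjoint edges contradicts parity (`no_planar_K33`).
-/


open scoped ENNReal

/-- A circular `r`-coloring of the signed graph `(G, σ)` (`σ e = true` meaning the edge `e`
is positive): a map `f : V → [0, r)` such that positive edges `uv` satisfy
`1 ≤ |f u - f v| ≤ r - 1` and negative edges satisfy
`|f u - f v| ≤ r/2 - 1` or `|f u - f v| ≥ r/2 + 1`. -/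
def IsCircularColoring {V : Type*} (G : SimpleGraph V) (σ : Sym2 V → Bool) (r : ℝ)
    (f : V → ℝ) : Prop :=
  (∀ v, 0 ≤ f v ∧ f v < r) ∧
  ∀ u v, G.Adj u v →
    (if σ s(u, v) then 1 ≤ |f u - f v| ∧ |f u - f v| ≤ r - 1
     else |f u - f v| ≤ r / 2 - 1 ∨ r / 2 + 1 ≤ |f u - f v|)

def HasCircularColoring {V : Type*} (G : SimpleGraph V) (σ : Sym2 V → Bool) (r : ℝ) : Prop :=
  ∃ f : V → ℝ, IsCircularColoring G σ r f

/-- The circular chromatic number of a signed graph, as an element of `ℝ≥0∞`: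
the infimum of all real numbers `r ≥ 2` admitting a circular `r`-coloring
(`⊤` if there is none). -/
noncomputable def circChrom {V : Type*} (G : SimpleGraph V) (σ : Sym2 V → Bool) : ℝ≥0∞ :=
  sInf (ENNReal.ofReal '' {r : ℝ | 2 ≤ r ∧ HasCircularColoring G σ r})

/-- A graph is planar if it has an embedding in the plane: points for vertices and
injective continuous arcs for edges, where an arc joins the endpoints of its edge,
the interior of an arc avoids all vertex points, and two distinct arcs meet only
at vertex points (hence only at common endpoints). -/
def IsPlanar {V : Type*} (G : SimpleGraph V) : Prop :=
  ∃ (p : V → ℝ × ℝ) (γ : Sym2 V → unitInterval → ℝ × ℝ),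
    Function.Injective p ∧
    (∀ e ∈ G.edgeSet, Continuous (γ e) ∧ Function.Injective (γ e)) ∧
    (∀ u v, G.Adj u v → ({γ s(u, v) 0, γ s(u, v) 1} : Set (ℝ × ℝ)) = {p u, p v}) ∧
    (∀ e ∈ G.edgeSet, ∀ t : unitInterval, t ≠ 0 → t ≠ 1 → γ e t ∉ Set.range p) ∧
    (∀ e ∈ G.edgeSet, ∀ e' ∈ G.edgeSet, e ≠ e' → ∀ s t : unitInterval,
      γ e s = γ e' t → γ e s ∈ Set.range p)

/-- A graph is bipartite if its vertex set splits into a part `A` and its complement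
such that every edge joins the two parts. -/
def IsBipartiteGraph {V : Type*} (G : SimpleGraph V) : Prop :=
  ∃ A : Set V, ∀ u v, G.Adj u v → (u ∈ A ↔ v ∉ A)

/-- A graph is 2-degenerate if every nonempty (induced) subgraph has a vertex of
degree at most 2 in it. -/
def TwoDegenerate {V : Type*} (G : SimpleGraph V) : Prop :=
  ∀ s : Set V, s.Nonempty → ∃ v ∈ s, ({u ∈ s | G.Adj v u}).ncard ≤ 2

namespace PushProof

/-! ### Winding numbers and drawings of the complete bipartite graph -/

open Complex in
lemma exists_continuous_log {X : Type*} [TopologicalSpace X] [SimplyConnectedSpace X]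
    [LocallyPathConnectedSpace X] (F : X → ℂ) (hF : Continuous F) (h0 : ∀ z, F z ≠ 0) :
    ∃ Λ : X → ℂ, Continuous Λ ∧ ∀ z, exp (Λ z) = F z := by
  obtain ⟨x⟩ : Nonempty X := inferInstance
  obtain ⟨L, hL, -⟩ := isCoveringMapOn_exp.existsUnique_continuousMap_lifts (⟨F, hF⟩ : C(X, ℂ))
    (a₀ := x) (e₀ := Complex.log (F x)) (by simp [exp_log (h0 x)]) (by simpa using h0)
  exact ⟨L, L.continuous, fun z => congrFun hL.2 z⟩

open Complex in
lemma log_diff_const {L L' : ℝ → ℂ} (hL : Continuous L) (hL' : Continuous L')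
    (h : ∀ t, exp (L t) = exp (L' t)) : L 1 - L 0 = L' 1 - L' 0 := by
  have h2 := isCoveringMap_exp.eq_of_comp_eq (g₁ := L) (g₂ := fun t => L' t + (L 0 - L' 0)) hL
    (by fun_prop) (by
      ext t
      simp only [Function.comp]
      rw [exp_add, exp_sub, h 0, div_self (exp_ne_zero _), mul_one, h t]) 0 (by ring)
  rw [congrFun h2 1]; ring

open Classical in
/-- The change along the path `δ`, between the times `0` and `1`, of a continuous logarithm
of `δ t - x`. -/
noncomputable def winding (δ : ℝ → ℂ) (x : ℂ) : ℂ :=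
  if h : ∃ L : ℝ → ℂ, Continuous L ∧ ∀ t, Complex.exp (L t) = δ t - x then
    h.choose 1 - h.choose 0 else 0

lemma winding_eq {δ : ℝ → ℂ} {x : ℂ} {L : ℝ → ℂ} (hL : Continuous L)
    (h : ∀ t, Complex.exp (L t) = δ t - x) : winding δ x = L 1 - L 0 := by
  have hex : ∃ L : ℝ → ℂ, Continuous L ∧ ∀ t, Complex.exp (L t) = δ t - x := ⟨L, hL, h⟩
  rw [winding, dif_pos hex]
  exact log_diff_const hex.choose_spec.1 hL fun t => by rw [hex.choose_spec.2 t, h t]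

open Complex in
lemma winding_eq_log {δ : ℝ → ℂ} {x : ℂ} (hδ : Continuous δ) (h : ∀ t, δ t ≠ x) :
    ∃ n : ℤ, winding δ x = log (δ 1 - x) - log (δ 0 - x) + n * (2 * Real.pi * I) := by
  obtain ⟨L, hL, hexp⟩ := exists_continuous_log (fun t => δ t - x) (by fun_prop)
    (fun t => sub_ne_zero.2 (h t))
  have key : ∀ t, ∃ n : ℤ, L t = log (δ t - x) + n * (2 * Real.pi * I) := fun t =>
    exp_eq_exp_iff_exists_int.1 (by rw [hexp t, exp_log (sub_ne_zero.2 (h t))])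
  obtain ⟨n, hn⟩ := key 1
  obtain ⟨m, hm⟩ := key 0
  refine ⟨n - m, ?_⟩
  rw [winding_eq hL hexp, hn, hm]; push_cast; ring

open Complex in
/-- The boundary of the square `[0,1]²` is null-homotopic under
`(s, t) ↦ δ s - ε t`, so the total change of the logarithm around it vanishes. -/
lemma winding_square {δ ε : ℝ → ℂ} (hδ : Continuous δ) (hε : Continuous ε)
    (h : ∀ s t, δ s ≠ ε t) :
    winding δ (ε 0) + winding ε (δ 1) - winding δ (ε 1) - winding ε (δ 0) = 0 := by
  obtain ⟨Λ, hΛ, hexp⟩ := exists_continuous_log (fun z : ℝ × ℝ => δ z.1 - ε z.2) (by fun_prop)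
    (fun z => sub_ne_zero.2 (h _ _))
  have e1 : ∀ c, winding δ (ε c) = Λ (1, c) - Λ (0, c) := fun c =>
    winding_eq (L := fun s => Λ (s, c)) (by fun_prop) (fun t => hexp _)
  -- `ε t - δ c = -(δ c - ε t)`, so a logarithm is obtained by adding `π i`
  have e2 : ∀ c, winding ε (δ c) = Λ (c, 1) - Λ (c, 0) := fun c => by
    rw [winding_eq (L := fun t => Λ (c, t) + Real.pi * I) (by fun_prop) (fun t => by
      rw [exp_add, hexp, exp_pi_mul_I]; ring)]
    ring
  rw [e1, e1, e2, e2]; ring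

open Complex in
lemma log_sub_swap {z w : ℂ} (h : z ≠ w) :
    ∃ n : ℤ, log (w - z) = log (z - w) + (2 * n + 1) * (Real.pi * I) := by
  have h' := sub_ne_zero.2 h
  obtain ⟨n, hn⟩ := exp_eq_exp_iff_exists_int.1
    (show exp (log (w - z)) = exp (log (z - w) + Real.pi * I) by
      rw [exp_log (sub_ne_zero.2 h.symm), exp_add, exp_log h', exp_pi_mul_I]; ring)
  exact ⟨n, by rw [hn]; ring⟩

/-- The complete bipartite graph `K₃,₃` cannot be drawn in the plane with vertex-disjoint edges
drawn disjointly: summing `winding_square` over all pairs of disjoint edges gives a contradiction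
modulo `2`. The drawing is encoded by paths on the whole real line, of which disjointness is
required at all parameters; arcs on `[0,1]` can be continued as constants. -/
lemma no_planar_K33 (u v : Fin 3 → ℂ) (δ : Fin 3 → Fin 3 → ℝ → ℂ)
    (hc : ∀ i j, Continuous (δ i j)) (h0 : ∀ i j, δ i j 0 = u i) (h1 : ∀ i j, δ i j 1 = v j)
    (hd : ∀ i j k l, i ≠ k → j ≠ l → ∀ s t, δ i j s ≠ δ k l t) : False := by
  have third : ∀ j : Fin 3, ∃ l, l ≠ j := by decide
  have hu : ∀ i j k, i ≠ k → ∀ t, δ i j t ≠ u k := fun i j k hik t => by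
    obtain ⟨l, hl⟩ := third j
    rw [← h0 k l]; exact hd i j k l hik hl.symm t 0
  have hv : ∀ i j l, j ≠ l → ∀ t, δ i j t ≠ v l := fun i j l hjl t => by
    obtain ⟨k, hk⟩ := third i
    rw [← h1 k l]; exact hd i j k l hk.symm hjl t 1
  have huv : ∀ j k, v j ≠ u k := fun j k => by
    obtain ⟨i, hi⟩ := third k
    rw [← h1 i j]; exact hu i j k hi 1
  have huu : ∀ i k, i ≠ k → u i ≠ u k := fun i k hik => by
    rw [← h0 i 0]; exact hu i 0 k hik 0
  have hn : ∀ i j k, ∃ n : ℤ, i ≠ k → winding (δ i j) (u k) =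
      Complex.log (v j - u k) - Complex.log (u i - u k) +
      n * (2 * Real.pi * Complex.I) := fun i j k => by
    by_cases hik : i = k
    · exact ⟨0, fun h => absurd hik h⟩
    · obtain ⟨n, hn⟩ := winding_eq_log (hc i j) (hu i j k hik)
      exact ⟨n, fun _ => by rw [hn, h0, h1]⟩
  have hm : ∀ i j l, ∃ n : ℤ, j ≠ l → winding (δ i j) (v l) =
      Complex.log (v j - v l) - Complex.log (u i - v l) +
      n * (2 * Real.pi * Complex.I) := fun i j l => by
    by_cases hjl : j = l
    · exact ⟨0, fun h => absurd hjl h⟩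
    · obtain ⟨n, hn⟩ := winding_eq_log (hc i j) (hv i j l hjl)
      exact ⟨n, fun _ => by rw [hn, h0, h1]⟩
  have ho : ∀ j k, ∃ n : ℤ, Complex.log (u k - v j) = Complex.log (v j - u k) +
      (2 * n + 1) * (Real.pi * Complex.I) := fun j k => log_sub_swap (huv j k)
  have hp : ∀ i k, ∃ n : ℤ, i ≠ k →
      Complex.log (u k - u i) = Complex.log (u i - u k) + (2 * n + 1) * (Real.pi * Complex.I) := fun i k => by
    by_cases hik : i = k
    · exact ⟨0, fun h => absurd hik h⟩
    · obtain ⟨n, hn⟩ := log_sub_swap (huu i k hik)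
      exact ⟨n, fun _ => hn⟩
  choose n hn using hn
  choose m hm using hm
  choose o ho using ho
  choose p hp using hp
  -- the sum of the two relations for the pairs of edges `{ij, kl}` and `{il, kj}`
  have E : ∀ i k j l, i ≠ k → j ≠ l → (2 * p i k + 1) + (o l i + o j i - o j k - o l k)
      + (n i j k + m k l j - m i j l - n k l i) + (n i l k + m k j l - m i l j - n k j i) = 0 := by
    intro i k j l hik hjl
    have e1 := winding_square (hc i j) (hc k l) (hd i j k l hik hjl)
    have e2 := winding_square (hc i l) (hc k j) (hd i l k j hik hjl.symm)
    rw [h0, h0, h1, h1, hn _ _ _ hik, hm _ _ _ hjl, hn _ _ _ hik.symm, hm _ _ _ hjl.symm, ho, ho,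
      hp _ _ hik] at e1 e2
    have e3 : ((2 * p i k + 1 + (o l i + o j i - o j k - o l k)
      + (n i j k + m k l j - m i j l - n k l i) +
        (n i l k + m k j l - m i l j - n k j i) : ℤ) : ℂ) * (2 * Real.pi * Complex.I) = 0 := by
      push_cast
      linear_combination e1 + e2
    have h2 : (2 * Real.pi * Complex.I : ℂ) ≠ 0 := by simp [Real.pi_ne_zero]
    exact_mod_cast (mul_eq_zero.1 e3).resolve_right h2
  have a1 := E 0 1 0 1 (by decide) (by decide)
  have a2 := E 0 1 0 2 (by decide) (by decide)
  have a3 := E 0 1 1 2 (by decide) (by decide)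
  have a4 := E 0 2 0 1 (by decide) (by decide)
  have a5 := E 0 2 0 2 (by decide) (by decide)
  have a6 := E 0 2 1 2 (by decide) (by decide)
  have a7 := E 1 2 0 1 (by decide) (by decide)
  have a8 := E 1 2 0 2 (by decide) (by decide)
  have a9 := E 1 2 1 2 (by decide) (by decide)
  -- every `n`, `m` and `o` occurs an even number of times in the sum, whereas the nine odd
  -- numbers `2 p + 1` add up to an odd number
  have := congrArg₂ (· + ·) a1 (congrArg₂ (· + ·) a2 (congrArg₂ (· + ·) a3 (congrArg₂ (· + ·) a4
    (congrArg₂ (· + ·) a5 (congrArg₂ (· + ·) a6 (congrArg₂ (· + ·) a7 (congrArg₂ (· + ·) a8 a9)))))))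
  clear a1 a2 a3 a4 a5 a6 a7 a8 a9 E
  omega

/-! ### Planar graphs have no K33 minor -/

/-- `X` is nonempty and connected in the graph with edge relation `r`. -/
def Conn {V : Type*} (r : V → V → Prop) (X : Set V) : Prop :=
  X.Nonempty ∧ ∀ x ∈ X, ∀ y ∈ X, Relation.ReflTransGen (fun p q => r p q ∧ p ∈ X ∧ q ∈ X) x y

/-- The graph with edge relation `r` has a `K₃,₃` minor inside `S`: six disjoint connected branch
sets, indexed by side and position, with an edge between any two branch sets on different
sides. -/
def HasK33 {V : Type*} (r : V → V → Prop) (S : Set V) : Prop :=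
  ∃ B : Bool → Fin 3 → Set V, (∀ i j, B i j ⊆ S ∧ Conn r (B i j)) ∧
    (∀ i j i' j', (i, j) ≠ (i', j') → Disjoint (B i j) (B i' j')) ∧
    ∀ j k, ∃ x ∈ B true j, ∃ y ∈ B false k, r x y

lemma conn_singleton {V : Type*} (r : V → V → Prop) (x : V) : Conn r {x} :=
  ⟨⟨x, rfl⟩, by rintro _ rfl _ rfl; exact .refl⟩

lemma reach_mono {V : Type*} {r : V → V → Prop} {X Y : Set V} (h : X ⊆ Y) {x y : V}
    (hxy : Relation.ReflTransGen (fun p q => r p q ∧ p ∈ X ∧ q ∈ X) x y) :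
    Relation.ReflTransGen (fun p q => r p q ∧ p ∈ Y ∧ q ∈ Y) x y :=
  Relation.ReflTransGen.mono (fun _ _ ⟨a, b, c⟩ => ⟨a, h b, h c⟩) _ _ hxy

/-- The part of a drawing (points `p`, arcs `γ`) that belongs to the subgraph induced on `X`. -/
def drawn {V E : Type*} (G : SimpleGraph V) (p : V → E) (γ : Sym2 V → unitInterval → E)
    (X : Set V) : Set E :=
  {z | (∃ x ∈ X, p x = z) ∨ ∃ e ∈ G.edgeSet, (∀ a ∈ e, a ∈ X) ∧ ∃ t, γ e t = z}

/-- The drawings of two branch sets and of an edge between them form a path-connected set, so a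
`K₃,₃` minor of a planar graph yields a drawing as excluded by `no_planar_K33`. -/
lemma not_hasK33_of_isPlanar {V : Type*} {G : SimpleGraph V} (hG : IsPlanar G) :
    ¬ HasK33 G.Adj Set.univ := by
  obtain ⟨p, γ, hp, hγ, hends, hint, hdisj⟩ := hG
  rintro ⟨B, hB, hBd, hBe⟩
  have hmem : ∀ e ∈ G.edgeSet, ∀ t x, γ e t = p x → x ∈ e := by
    intro e
    induction e with
    | h a b =>
      intro he t x hx
      have hab := hends a b he
      have ht : γ s(a, b) t ∈ ({γ s(a, b) 0, γ s(a, b) 1} : Set (ℝ × ℝ)) := by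
        by_cases h0 : t = 0
        · rw [h0]; simp
        by_cases h1 : t = 1
        · rw [h1]; simp
        · exact absurd ⟨x, hx.symm⟩ (hint _ he t h0 h1)
      rw [hab, hx] at ht
      rcases ht with ht | ht
      · rw [hp ht]; simp
      · rw [hp ht]; simp
  have hdis : ∀ X Z : Set V, Disjoint X Z → ∀ z ∈ drawn G p γ X, ∀ z' ∈ drawn G p γ Z,
      z ≠ z' := by
    intro X Z hXZ z hz z' hz' hzz
    subst hzz
    rw [Set.disjoint_left] at hXZ
    rcases hz with ⟨x, hx, rfl⟩ | ⟨e, he, heX, t, rfl⟩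
    · rcases hz' with ⟨y, hy, hxy⟩ | ⟨e, he, heX, t, ht⟩
      · exact hXZ hx (hp hxy ▸ hy)
      · exact hXZ hx (heX _ (hmem e he t x ht))
    · rcases hz' with ⟨y, hy, hxy⟩ | ⟨e', he', heX', t', ht'⟩
      · exact hXZ (heX _ (hmem e he t y hxy.symm)) hy
      · have hee : e ≠ e' := by
          rintro rfl
          induction e with
          | h a b => exact hXZ (heX a (by simp)) (heX' a (by simp))
        obtain ⟨x, hx⟩ := hdisj e he e' he' hee t t' ht'.symm
        exact hXZ (heX _ (hmem e he t x hx.symm)) (heX' _ (hmem e' he' t' x (ht'.trans hx.symm)))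
  have hedge : ∀ X : Set V, ∀ a ∈ X, ∀ b ∈ X, G.Adj a b →
      JoinedIn (drawn G p γ X) (p a) (p b) := by
    intro X a ha b hb hab
    have hsub : ∀ t, γ s(a, b) t ∈ drawn G p γ X := fun t =>
      Or.inr ⟨s(a, b), hab, by simp [ha, hb], t, rfl⟩
    have hj : JoinedIn (drawn G p γ X) (γ s(a, b) 0) (γ s(a, b) 1) :=
      ⟨⟨⟨γ s(a, b), (hγ _ hab).1⟩, rfl, rfl⟩, hsub⟩
    have he := hends a b hab
    rcases Set.pair_eq_pair_iff.1 he with ⟨h1, h2⟩ | ⟨h1, h2⟩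
    · rwa [h1, h2] at hj
    · rw [h1, h2] at hj; exact hj.symm
  have hreach : ∀ X : Set V, ∀ a ∈ X, ∀ b, Relation.ReflTransGen
      (fun p q => G.Adj p q ∧ p ∈ X ∧ q ∈ X) a b → JoinedIn (drawn G p γ X) (p a) (p b) := by
    intro X a ha b hab
    induction hab with
    | refl => exact JoinedIn.refl (Or.inl ⟨a, ha, rfl⟩)
    | tail _ h ih => exact ih.trans (hedge X _ h.2.1 _ h.2.2 h.1)
  choose b hb using fun i j => (hB i j).2.1
  have hjoin : ∀ i j, JoinedIn (drawn G p γ (B true i ∪ B false j))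
      (p (b true i)) (p (b false j)) := by
    intro i j
    obtain ⟨x, hx, y, hy, hxy⟩ := hBe i j
    have h1 := hreach (B true i ∪ B false j) (b true i) (.inl (hb _ _)) x
      (reach_mono Set.subset_union_left ((hB true i).2.2 _ (hb _ _) x hx))
    have h2 := hreach (B true i ∪ B false j) y (.inr hy) (b false j)
      (reach_mono Set.subset_union_right ((hB false j).2.2 _ hy _ (hb _ _)))
    exact (h1.trans (hedge _ x (.inl hx) y (.inr hy) hxy)).trans h2
  choose δ hδ using hjoin
  let φ := Complex.equivRealProdCLM.symm
  refine no_planar_K33 (fun i => φ (p (b true i))) (fun j => φ (p (b false j)))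
    (fun i j t => φ (δ i j (Set.projIcc 0 1 zero_le_one t))) ?_ ?_ ?_ ?_
  · intro i j
    exact φ.continuous.comp ((δ i j).continuous.comp continuous_projIcc)
  · intro i j; simp
  · intro i j; simp
  · intro i j k l hik hjl s t h
    refine hdis _ _ ?_ _ (hδ i j _) _ (hδ k l _) (φ.injective h)
    simp only [Set.disjoint_union_left, Set.disjoint_union_right]
    refine ⟨⟨hBd _ _ _ _ ?_, hBd _ _ _ _ ?_⟩, hBd _ _ _ _ ?_, hBd _ _ _ _ ?_⟩ <;>
      simp [hik, hjl]

/-! ### Operations preserving minors -/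

section Minors

variable {V : Type*} {r r' : V → V → Prop}

/-- Minors compose: if each vertex `x` of a graph on `S'` is blown up to a connected set `F x`,
so that edges are realised between the blown up sets, then `K₃,₃` minors are inherited. -/
lemma HasK33.of_branch {S S' : Set V} (F : V → Set V) (hS : ∀ x ∈ S', F x ⊆ S)
    (hc : ∀ x ∈ S', Conn r (F x)) (hd : ∀ x ∈ S', ∀ y ∈ S', x ≠ y → Disjoint (F x) (F y))
    (he : ∀ x ∈ S', ∀ y ∈ S', r' x y → ∃ z ∈ F x, ∃ z' ∈ F y, r z z') (h : HasK33 r' S') :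
    HasK33 r S := by
  obtain ⟨B, hB, hBd, hBe⟩ := h
  have hsub : ∀ i j x, x ∈ B i j → F x ⊆ ⋃ x ∈ B i j, F x := fun i j x hx z hz =>
    Set.mem_biUnion hx hz
  refine ⟨fun i j => ⋃ x ∈ B i j, F x, fun i j => ⟨?_, ?_, ?_⟩, ?_, ?_⟩
  · exact Set.iUnion₂_subset fun x hx => hS x ((hB i j).1 hx)
  · obtain ⟨x, hx⟩ := (hB i j).2.1
    obtain ⟨z, hz⟩ := (hc x ((hB i j).1 hx)).1
    exact ⟨z, hsub i j x hx hz⟩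
  · intro z hz z' hz'
    obtain ⟨x, hx, hz⟩ := Set.mem_iUnion₂.1 hz
    obtain ⟨x', hx', hz'⟩ := Set.mem_iUnion₂.1 hz'
    have key : ∀ y, Relation.ReflTransGen (fun p q => r' p q ∧ p ∈ B i j ∧ q ∈ B i j) x y →
        ∀ w ∈ F y, Relation.ReflTransGen (fun p q => r p q ∧ p ∈ (⋃ x ∈ B i j, F x) ∧
          q ∈ ⋃ x ∈ B i j, F x) z w := by
      intro y hy
      induction hy with
      | refl => exact fun w hw => reach_mono (hsub i j x hx) ((hc x ((hB i j).1 hx)).2 z hz w hw)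
      | tail _ h ih =>
        intro w hw
        obtain ⟨h1, h2, h3⟩ := h
        obtain ⟨s, hs, t, ht, hst⟩ := he _ ((hB i j).1 h2) _ ((hB i j).1 h3) h1
        exact ((ih s hs).tail ⟨hst, hsub i j _ h2 hs, hsub i j _ h3 ht⟩).trans
          (reach_mono (hsub i j _ h3) ((hc _ ((hB i j).1 h3)).2 t ht w hw))
    exact key x' ((hB i j).2.2 x hx x' hx') z' hz'
  · intro i j i' j' hne
    simp only [Set.disjoint_iUnion_left, Set.disjoint_iUnion_right]
    intro x hx y hy
    have hdis := hBd i j i' j' hne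
    refine hd y ((hB i j).1 hy) x ((hB i' j').1 hx) ?_
    rintro rfl
    exact Set.disjoint_left.1 hdis hy hx
  · intro j k
    obtain ⟨x, hx, y, hy, hxy⟩ := hBe j k
    obtain ⟨s, hs, t, ht, hst⟩ := he x ((hB _ _).1 hx) y ((hB _ _).1 hy) hxy
    exact ⟨s, hsub _ _ x hx hs, t, hsub _ _ y hy ht, hst⟩

lemma HasK33.mono {S S' : Set V} (hS : S' ⊆ S) (hr : ∀ x ∈ S', ∀ y ∈ S', r' x y → r x y)
    (h : HasK33 r' S') : HasK33 r S :=
  h.of_branch (fun x => {x}) (fun x hx => by simpa using hS hx) (fun x _ => conn_singleton r x)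
    (fun x _ y _ hxy => by simpa using hxy) (fun x hx y hy hxy => ⟨x, rfl, y, rfl, hr x hx y hy hxy⟩)

lemma Conn.insert_adj (hr : ∀ x y, r x y → r y x) {X : Set V} (hX : Conn r X) {x z : V} (hx : x ∈ X)
    (hxz : r x z) : Conn r (insert z X) := by
  have h1 : ∀ y ∈ X, Relation.ReflTransGen (fun p q => r p q ∧ p ∈ insert z X ∧ q ∈ insert z X)
      y z := fun y hy => (reach_mono (Set.subset_insert _ _) (hX.2 y hy x hx)).tail
        ⟨hxz, .inr hx, .inl rfl⟩
  have h2 : ∀ y ∈ X, Relation.ReflTransGen (fun p q => r p q ∧ p ∈ insert z X ∧ q ∈ insert z X)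
      z y := fun y hy => Relation.ReflTransGen.head ⟨hr _ _ hxz, .inl rfl, .inr hx⟩
        (reach_mono (Set.subset_insert _ _) (hX.2 x hx y hy))
  refine ⟨⟨z, .inl rfl⟩, ?_⟩
  rintro s (rfl | hs) t (rfl | ht)
  · exact .refl
  · exact h2 t ht
  · exact h1 s hs
  · exact reach_mono (Set.subset_insert _ _) (hX.2 s hs t ht)

open Classical in
/-- Contracting the path `a v b` to `a`. -/
lemma HasK33.of_identify (hr : ∀ x y, r x y → r y x) {S S' : Set V} {a b v : V}
    (ha : a ∈ S) (hb : b ∈ S) (hv : v ∈ S) (hva : r v a) (hvb : r v b)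
    (hS : S' ⊆ S) (hv' : v ∉ S') (hb' : b ∉ S')
    (h' : ∀ x ∈ S', ∀ y ∈ S', r' x y → r x y ∨ (x = a ∧ r b y) ∨ (y = a ∧ r x b))
    (h : HasK33 r' S') : HasK33 r S := by
  have hne : ∀ y ∈ S', y ≠ a → y ∉ ({a, b, v} : Set V) := by
    rintro y hy hya (h | h | h)
    · exact hya h
    · exact hb' (h ▸ hy)
    · exact hv' (h ▸ hy)
  refine h.of_branch (fun x => if x = a then {a, b, v} else {x}) ?_ ?_ ?_ ?_
  · intro x hx
    split_ifs with hxa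
    · rintro y (rfl | rfl | rfl) <;> assumption
    · simpa using hS hx
  · intro x hx
    split_ifs with hxa
    · exact ((conn_singleton r v).insert_adj hr rfl hvb).insert_adj hr (.inr rfl) hva
    · exact conn_singleton r x
  · intro x hx y hy hxy
    split_ifs with hxa hya hya
    · exact absurd (hxa.trans hya.symm) hxy
    · exact Set.disjoint_singleton_right.2 (hne y hy hya)
    · exact Set.disjoint_singleton_left.2 (hne x hx hxa)
    · simpa using hxy
  · have hself : ∀ x, x ∈ (if x = a then {a, b, v} else {x} : Set V) := fun x => by
      split_ifs with hx
      · exact .inl hx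
      · rfl
    intro x hx y hy hxy
    rcases h' x hx y hy hxy with h | ⟨rfl, h⟩ | ⟨rfl, h⟩
    · exact ⟨x, hself x, y, hself y, h⟩
    · exact ⟨b, by simp, y, hself y, h⟩
    · exact ⟨x, hself x, b, by simp, h⟩

open Classical in
/-- An edge `ab` may be added to `S'` if a connected set outside `S'` is attached to
both `a` and `b`. -/
lemma HasK33.of_contract (hr : ∀ x y, r x y → r y x) {S S' D : Set V} {a b d d' : V}
    (hD : Conn r D) (hDS : D ⊆ S) (hDS' : Disjoint D S') (hS : S' ⊆ S) (ha : a ∈ S)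
    (hd : d ∈ D) (hd' : d' ∈ D) (hda : r d a) (hdb : r d' b)
    (h' : ∀ x ∈ S', ∀ y ∈ S', r' x y → r x y ∨ (x = a ∧ y = b) ∨ (x = b ∧ y = a))
    (h : HasK33 r' S') : HasK33 r S := by
  have hne : ∀ y ∈ S', y ≠ a → y ∉ insert a D := by
    rintro y hy hya (h | h)
    · exact hya h
    · exact Set.disjoint_left.1 hDS' h hy
  have hself : ∀ x, x ∈ (if x = a then insert a D else {x} : Set V) := fun x => by
      split_ifs with hx
      · exact .inl hx
      · rfl
  refine h.of_branch (fun x => if x = a then insert a D else {x}) ?_ ?_ ?_ ?_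
  · intro x hx
    split_ifs with hxa
    · rintro y (rfl | h)
      · exact ha
      · exact hDS h
    · simpa using hS hx
  · intro x hx
    split_ifs with hxa
    · exact hD.insert_adj hr hd hda
    · exact conn_singleton r x
  · intro x hx y hy hxy
    split_ifs with hxa hya hya
    · exact absurd (hxa.trans hya.symm) hxy
    · exact Set.disjoint_singleton_right.2 (hne y hy hya)
    · exact Set.disjoint_singleton_left.2 (hne x hx hxa)
    · simpa using hxy
  · intro x hx y hy hxy
    rcases h' x hx y hy hxy with h | ⟨rfl, rfl⟩ | ⟨rfl, rfl⟩
    · exact ⟨x, hself x, y, hself y, h⟩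
    · exact ⟨d', by simp [hd'], y, hself y, hdb⟩
    · exact ⟨x, hself x, d', by simp [hd'], hr _ _ hdb⟩

/-- If `v` has exactly the neighbours `a, b, c` and `w₁, w₂` are further common neighbours of `a`
and `b`, then connectedness of the complement of the `4`-cycle `a w₁ b w₂` produces a `K₃,₃`
minor with branch sets `a`, `b`, the rest, and `w₁`, `w₂`, `v`. -/
lemma HasK33.of_conn_compl (hr : ∀ x y, r x y → r y x) {S : Set V} {v a b c w₁ w₂ : V}
    (hvS : v ∈ S) (haS : a ∈ S) (hbS : b ∈ S) (hcS : c ∈ S) (hw₁S : w₁ ∈ S) (hw₂S : w₂ ∈ S)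
    (hN : ∀ x ∈ S, r v x → x = a ∨ x = b ∨ x = c)
    (hva : r v a) (hvb : r v b) (hvc : r v c) (haw₁ : r a w₁) (hbw₁ : r b w₁)
    (haw₂ : r a w₂) (hbw₂ : r b w₂)
    (hd : [v, a, b, c, w₁, w₂].Nodup)
    {x₁ x₂ : V} (hx₁ : x₁ ∈ S \ {a, b, w₁, w₂}) (hx₂ : x₂ ∈ S \ {a, b, w₁, w₂})
    (hx₁v : x₁ ≠ v) (hx₂v : x₂ ≠ v) (h₁ : r x₁ w₁) (h₂ : r x₂ w₂)
    (hR : Conn r (S \ {a, b, w₁, w₂})) : HasK33 r S := by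
  classical
  simp only [List.nodup_cons, List.mem_cons, List.not_mem_nil, or_false, not_or,
    List.nodup_nil, and_true, not_false_eq_true] at hd
  obtain ⟨⟨d1, d2, d3, d4, d5⟩, ⟨d6, d7, d8, d9⟩, ⟨d10, d11, d12⟩, ⟨d13, d14⟩, d15⟩ := hd
  set R : Set V := S \ {a, b, w₁, w₂} with hRdef
  have hcR : c ∈ R \ {v} := by
    simp only [hRdef, Set.mem_sdiff, Set.mem_insert_iff, Set.mem_singleton_iff]
    refine ⟨⟨hcS, ?_⟩, Ne.symm d3⟩
    rintro (h | h | h | h)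
    · exact d7 h.symm
    · exact d10 h.symm
    · exact d13 h
    · exact d14 h
  have hconn : Conn r (R \ {v}) := by
    refine ⟨⟨c, hcR⟩, fun x hx y hy => ?_⟩
    have hleaf : ∀ z ∈ R, r v z → z = c := fun z hz hvz => by
      simp only [hRdef, Set.mem_sdiff, Set.mem_insert_iff, Set.mem_singleton_iff, not_or] at hz
      rcases hN z hz.1 hvz with h | h | h
      · exact absurd h hz.2.1
      · exact absurd h hz.2.2.1
      · exact h
    have hf : ∀ z ∈ R, (if z = v then c else z) ∈ R \ {v} := fun z hz => by
      split_ifs with hzv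
      · exact hcR
      · exact ⟨hz, hzv⟩
    have hp := hR.2 x hx.1 y hy.1
    have hlift := Relation.ReflTransGen.lift' (p := fun p q => r p q ∧ p ∈ R \ {v} ∧ q ∈ R \ {v})
      (fun z => if z = v then c else z) (fun p q (hpq : r p q ∧ p ∈ R ∧ q ∈ R) => by
        obtain ⟨h1, hpR, hqR⟩ := hpq
        have e1 := hf p hpR
        have e2 := hf q hqR
        dsimp only [Function.onFun]
        by_cases hpv : p = v
        · have hqc : q = c := hleaf q hqR (hpv ▸ h1)
          rw [if_pos hpv, if_neg (by rw [hqc]; exact Ne.symm d3), hqc]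
        · by_cases hqv : q = v
          · have hpc : p = c := hleaf p hpR (hqv ▸ hr _ _ h1)
            rw [if_pos hqv, if_neg hpv, hpc]
          · rw [if_neg hpv] at e1
            rw [if_neg hqv] at e2
            rw [if_neg hpv, if_neg hqv]
            exact .single ⟨h1, e1, e2⟩) _ _ hp
    dsimp only [Function.onFun] at hlift
    rwa [if_neg (show ¬ x = v from hx.2), if_neg (show ¬ y = v from hy.2)] at hlift
  have hnR : ∀ z, z = a ∨ z = b ∨ z = w₁ ∨ z = w₂ ∨ z = v → z ∉ R \ {v} := by
    rintro z h ⟨hz, hzv⟩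
    simp only [hRdef, Set.mem_sdiff, Set.mem_insert_iff, Set.mem_singleton_iff, not_or] at hz hzv
    tauto
  refine ⟨fun i j => if i then ![{a}, {b}, R \ {v}] j else ![{w₁}, {w₂}, {v}] j, ?_, ?_, ?_⟩
  · have hsub : R \ {v} ⊆ S := fun z hz => hz.1.1
    intro i j
    cases i <;> fin_cases j
    · exact ⟨by simpa using hw₁S, conn_singleton r w₁⟩
    · exact ⟨by simpa using hw₂S, conn_singleton r w₂⟩
    · exact ⟨by simpa using hvS, conn_singleton r v⟩
    · exact ⟨by simpa using haS, conn_singleton r a⟩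
    · exact ⟨by simpa using hbS, conn_singleton r b⟩
    · exact ⟨hsub, hconn⟩
  · have hs : ∀ z, z = a ∨ z = b ∨ z = w₁ ∨ z = w₂ ∨ z = v → Disjoint {z} (R \ {v}) := fun z hz =>
      Set.disjoint_singleton_left.2 (hnR z hz)
    have ea := hs a (by simp)
    have eb := hs b (by simp)
    have ew₁ := hs w₁ (by simp)
    have ew₂ := hs w₂ (by simp)
    have ev := hs v (by simp)
    intro i j i' j' hne
    cases i <;> cases i' <;> fin_cases j <;> fin_cases j' <;>
      first
      | exact absurd rfl hne
      | (simp only [Bool.false_eq_true, if_true, if_false]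
         first
         | exact ea | exact ea.symm | exact eb | exact eb.symm | exact ew₁ | exact ew₁.symm
         | exact ew₂ | exact ew₂.symm | exact ev | exact ev.symm
         | (refine Set.disjoint_singleton.2 ?_; first | assumption | (apply Ne.symm; assumption)))
  · have hx₁' : x₁ ∈ R \ {v} := ⟨hx₁, hx₁v⟩
    have hx₂' : x₂ ∈ R \ {v} := ⟨hx₂, hx₂v⟩
    intro j k
    fin_cases j <;> fin_cases k
    · exact ⟨a, rfl, w₁, rfl, haw₁⟩
    · exact ⟨a, rfl, w₂, rfl, haw₂⟩
    · exact ⟨a, rfl, v, rfl, hr _ _ hva⟩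
    · exact ⟨b, rfl, w₁, rfl, hbw₁⟩
    · exact ⟨b, rfl, w₂, rfl, hbw₂⟩
    · exact ⟨b, rfl, v, rfl, hr _ _ hvb⟩
    · exact ⟨x₁, hx₁', w₁, rfl, h₁⟩
    · exact ⟨x₂, hx₂', w₂, rfl, h₂⟩
    · exact ⟨c, hcR, v, rfl, hr _ _ hvc⟩

lemma hasK33_of_singletons {V : Type*} {r : V → V → Prop} {S : Set V} {x z : Fin 3 → V}
    (hx : ∀ i, x i ∈ S) (hz : ∀ i, z i ∈ S) (hxi : ∀ i j, x i = x j → i = j)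
    (hzi : ∀ i j, z i = z j → i = j) (h : ∀ i j, r (x i) (z j)) (hirr : ∀ u, ¬ r u u) :
    HasK33 r S := by
  have hne : ∀ i j, x i ≠ z j := fun i j e => hirr _ (e ▸ h i j)
  refine ⟨fun t i => {if t then x i else z i}, fun t i => ⟨?_, conn_singleton r _⟩, ?_, ?_⟩
  · rw [Set.singleton_subset_iff]; split_ifs
    · exact hx i
    · exact hz i
  · intro t i t' i' hij
    rw [Set.disjoint_singleton]
    intro e
    cases t <;> cases t' <;> simp only [if_true, Bool.false_eq_true, if_false] at e
    · exact hij (by rw [hzi _ _ e])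
    · exact hne _ _ e.symm
    · exact hne _ _ e
    · exact hij (by rw [hxi _ _ e])
  · exact fun j k => ⟨_, rfl, _, rfl, by simpa using h j k⟩

end Minors

/-! ### Components and edge counts -/

open scoped Classical in
/-- The component of `v` in the subgraph induced on `R`. -/
noncomputable def comp {V : Type*} (r : V → V → Prop) (R : Finset V) (v : V) : Finset V :=
  R.filter fun x => Relation.ReflTransGen (fun p q => r p q ∧ p ∈ R ∧ q ∈ R) v x

section Counting

open scoped Classical

variable {V : Type*} {r : V → V → Prop}

lemma comp_subset (R : Finset V) (v : V) : comp r R v ⊆ R := Finset.filter_subset _ _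

lemma self_mem_comp {R : Finset V} {v : V} (hv : v ∈ R) : v ∈ comp r R v :=
  Finset.mem_filter.2 ⟨hv, .refl⟩

lemma mem_comp_of_adj {R : Finset V} {v x y : V} (hx : x ∈ comp r R v) (hy : y ∈ R)
    (hxy : r x y) : y ∈ comp r R v := by
  obtain ⟨h1, h2⟩ := Finset.mem_filter.1 hx
  exact Finset.mem_filter.2 ⟨hy, h2.tail ⟨hxy, h1, hy⟩⟩

lemma comp_conn (hr : ∀ x y, r x y → r y x) {R : Finset V} {v : V} (hv : v ∈ R) :
    Conn r (comp r R v : Set V) := by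
  have key : ∀ x ∈ comp r R v, Relation.ReflTransGen
      (fun p q => r p q ∧ p ∈ (comp r R v : Set V) ∧ q ∈ (comp r R v : Set V)) v x := by
    intro x hx
    have hx' := (Finset.mem_filter.1 hx).2
    clear hx
    induction hx' with
    | refl => exact .refl
    | tail h1 h2 ih =>
      refine ih.tail ⟨h2.1, Finset.mem_filter.2 ⟨h2.2.1, h1⟩,
        Finset.mem_filter.2 ⟨h2.2.2, h1.tail h2⟩⟩
  have hsymm : ∀ x ∈ comp r R v, Relation.ReflTransGen
      (fun p q => r p q ∧ p ∈ (comp r R v : Set V) ∧ q ∈ (comp r R v : Set V)) x v := by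
    intro x hx
    have h := key x hx
    clear hx
    induction h with
    | refl => exact .refl
    | tail _ h2 ih => exact ih.head ⟨hr _ _ h2.1, h2.2.2, h2.2.1⟩
  exact ⟨⟨v, self_mem_comp hv⟩, fun x hx y hy => (hsymm x hx).trans (key y hy)⟩

lemma exists_not_mem_comp (hr : ∀ x y, r x y → r y x) {R : Finset V} {v : V} (hv : v ∈ R)
    (h : ¬ Conn r (R : Set V)) : ∃ y ∈ R, y ∉ comp r R v := by
  by_contra! hcon
  have : comp r R v = R := Finset.Subset.antisymm (comp_subset R v) hcon
  exact h (this ▸ comp_conn hr hv)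

/-- Removing `C` cuts a component `D` of `S \ C` off: every edge lies within `C ∪ D` or
within `S \ D`, and these sets overlap in `C`. -/
lemma comp_cut (hr : ∀ x y, r x y → r y x) {S C D : Finset V} (hC : C ⊆ S) {v : V}
    (hD : D = comp r (S \ C) v) : (C ∪ D) ∪ (S \ D) = S ∧ (C ∪ D) ∩ (S \ D) = C ∧
    ∀ x ∈ S, ∀ y ∈ S, r x y → (x ∈ C ∪ D ∧ y ∈ C ∪ D) ∨ (x ∈ S \ D ∧ y ∈ S \ D) := by
  have hDR : ∀ x, x ∈ D → x ∈ S ∧ x ∉ C := fun x hx => by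
    rw [hD] at hx; exact Finset.mem_sdiff.1 (comp_subset _ _ hx)
  have hadj : ∀ x y, x ∈ D → y ∈ S → y ∉ C → r x y → y ∈ D := fun x y hx hy hy' h => by
    rw [hD] at hx ⊢; exact mem_comp_of_adj hx (Finset.mem_sdiff.2 ⟨hy, hy'⟩) h
  refine ⟨?_, ?_, ?_⟩
  · ext x
    have := hDR x; have := @hC x
    simp only [Finset.mem_union, Finset.mem_sdiff]; tauto
  · ext x
    have := hDR x; have := @hC x
    simp only [Finset.mem_union, Finset.mem_sdiff, Finset.mem_inter]; tauto
  · intro x hx y hy hxy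
    have h1 := hadj x y; have h2 := hadj y x; have h3 := hr x y hxy
    simp only [Finset.mem_union, Finset.mem_sdiff]; tauto

/-- Neighbours of `x` in `S`. -/
noncomputable def nb (r : V → V → Prop) (S : Finset V) (x : V) : Finset V := S.filter (r x)

/-- The number of darts (ordered adjacent pairs) in `S`, that is, twice the number of edges. -/
noncomputable def darts (r : V → V → Prop) (S : Finset V) : ℕ :=
  ((S ×ˢ S).filter fun e => r e.1 e.2).card

lemma mem_nb {S : Finset V} {x y : V} : y ∈ nb r S x ↔ y ∈ S ∧ r x y := Finset.mem_filter

lemma nb_subset (S : Finset V) (x : V) : nb r S x ⊆ S := Finset.filter_subset _ _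

lemma darts_eq_sum (S : Finset V) : darts r S = ∑ x ∈ S, (nb r S x).card := by
  simp only [darts, nb, Finset.card_filter, Finset.sum_product]

lemma darts_mono {r' : V → V → Prop} {S T : Finset V} (h : S ⊆ T)
    (hr : ∀ x ∈ S, ∀ y ∈ S, r x y → r' x y) : darts r S ≤ darts r' T := by
  refine Finset.card_le_card fun e he => ?_
  simp only [Finset.mem_filter, Finset.mem_product] at he ⊢
  exact ⟨⟨h he.1.1, h he.1.2⟩, hr _ he.1.1 _ he.1.2 he.2⟩

lemma nb_insert {T : Finset V} {x y : V} (h : ¬ r x y) : nb r (insert y T) x = nb r T x := by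
  rw [nb, Finset.filter_insert, if_neg h]; rfl

lemma darts_insert (hr : ∀ x y, r x y → r y x) {T : Finset V} {x : V} (hx : x ∉ T)
    (hxx : ¬ r x x) : darts r (insert x T) = darts r T + 2 * (nb r T x).card := by
  have h1 : ∀ y ∈ T, (nb r (insert x T) y).card = (nb r T y).card + if r x y then 1 else 0 := by
    intro y hy
    by_cases h : r x y
    · rw [nb, Finset.filter_insert, if_pos (hr _ _ h), if_pos h, Finset.card_insert_of_notMem]
      · rfl
      · simp [hx]
    · rw [nb_insert fun h' => h (hr _ _ h'), if_neg h, add_zero]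
  rw [darts_eq_sum, Finset.sum_insert hx, nb_insert hxx, Finset.sum_congr rfl h1,
    Finset.sum_add_distrib, ← darts_eq_sum]
  have : ∑ y ∈ T, (if r x y then 1 else 0) = (nb r T x).card := by
    simp [nb]
  omega

lemma darts_erase (hr : ∀ x y, r x y → r y x) {S : Finset V} {x : V} (hx : x ∈ S)
    (hxx : ¬ r x x) : darts r S = darts r (S.erase x) + 2 * (nb r S x).card := by
  have h := darts_insert hr (Finset.notMem_erase x S) hxx
  rw [← nb_insert hxx, Finset.insert_erase hx] at h
  exact h

lemma darts_glue {S₁ S₂ : Finset V}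
    (h : ∀ x ∈ S₁ ∪ S₂, ∀ y ∈ S₁ ∪ S₂, r x y → (x ∈ S₁ ∧ y ∈ S₁) ∨ (x ∈ S₂ ∧ y ∈ S₂)) :
    darts r (S₁ ∪ S₂) + darts r (S₁ ∩ S₂) = darts r S₁ + darts r S₂ := by
  unfold darts
  refine Eq.trans ?_ (Finset.card_union_add_card_inter _ _)
  congr 2
  · ext ⟨x, y⟩
    simp only [Finset.mem_filter, Finset.mem_product, Finset.mem_union] at h ⊢
    constructor
    · rintro ⟨⟨h1, h2⟩, h3⟩
      have := h x h1 y h2 h3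
      tauto
    · tauto
  · ext ⟨x, y⟩
    simp only [Finset.mem_filter, Finset.mem_product, Finset.mem_inter]
    tauto

/-- A `4`-cycle has eight darts. -/
lemma eight_le_darts (hr : ∀ x y, r x y → r y x) (hirr : ∀ x, ¬ r x x) {a b w₁ w₂ : V}
    (hab : a ≠ b) (hw : w₁ ≠ w₂)
    (haw₁ : r a w₁) (hbw₁ : r b w₁) (haw₂ : r a w₂) (hbw₂ : r b w₂) :
    8 ≤ darts r {a, b, w₁, w₂} := by
  have ne : ∀ {x y}, r x y → x ≠ y := fun h e => hirr _ (e ▸ h)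
  have h1 : w₂ ∉ ({a, b} : Finset V) := by simp [(ne haw₂).symm, (ne hbw₂).symm]
  have h2 : w₁ ∉ (insert w₂ {a, b} : Finset V) := by
    simp [(ne haw₁).symm, (ne hbw₁).symm, hw]
  have e : ({a, b, w₁, w₂} : Finset V) = insert w₁ (insert w₂ {a, b}) := by
    ext x; simp; tauto
  rw [e, darts_insert hr h2 (hirr _), darts_insert hr h1 (hirr _)]
  have key : ∀ (T : Finset V) (w : V), {a, b} ⊆ T → r a w → r b w → 2 ≤ (nb r T w).card := by
    intro T w hT h3 h4
    rw [← Finset.card_pair hab]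
    refine Finset.card_le_card fun x hx => mem_nb.2 ⟨hT hx, ?_⟩
    rcases Finset.mem_insert.1 hx with rfl | hx
    · exact hr _ _ h3
    · rw [Finset.mem_singleton.1 hx]; exact hr _ _ h4
  have := key {a, b} w₂ (by simp) haw₂ hbw₂
  have := key (insert w₂ {a, b}) w₁ (Finset.subset_insert _ _) haw₁ hbw₁
  omega

end Counting

/-! ### The edge bound -/

section EdgeBound

open scoped Classical

variable {V : Type*}

lemma dart_le_of_cut {r : V → V → Prop} (hr : ∀ x y, r x y → r y x) {β : V → Bool}
    {S : Finset V} (hβ : ∀ x ∈ S, ∀ y ∈ S, r x y → β x ≠ β y) (h3 : S.card = 3) :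
    darts r S + 8 ≤ 4 * S.card := by
  obtain ⟨x, y, z, hxy, hxz, hyz, rfl⟩ := Finset.card_eq_three.1 h3
  have main : ∀ p q t : V, p ≠ q → p ≠ t → q ≠ t → β p = β q → (∀ x ∈ ({p, q, t} : Finset V),
      ∀ y ∈ ({p, q, t} : Finset V), r x y → β x ≠ β y) → darts r {p, q, t} ≤ 4 := by
    intro p q t hpq hpt hqt hb h
    have hirr : ∀ x ∈ ({p, q, t} : Finset V), ¬ r x x := fun x hx h' => h x hx x hx h' rfl
    have hpq' : ¬ r q p := fun h' => h q (by simp) p (by simp) h' hb.symm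
    have e : ({p, q, t} : Finset V) = insert t (insert q {p}) := by
      ext x; simp; tauto
    have e1 : nb r {p} q = ∅ := by
      ext x; simp only [mem_nb, Finset.mem_singleton, Finset.notMem_empty, iff_false]
      rintro ⟨rfl, h'⟩; exact hpq' h'
    have e2 : darts r {p} = 0 := by
      rw [darts_eq_sum, Finset.sum_singleton, Finset.card_eq_zero]
      ext x; simp only [mem_nb, Finset.mem_singleton, Finset.notMem_empty, iff_false]
      rintro ⟨rfl, h'⟩; exact hirr x (by simp) h'
    have e3 : (nb r (insert q {p}) t).card ≤ 2 :=
      (Finset.card_filter_le _ _).trans (by rw [Finset.card_pair hpq.symm])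
    rw [e, darts_insert hr (by simp [hpt.symm, hqt.symm]) (hirr t (by simp)),
      darts_insert hr (by simp [hpq.symm]) (hirr q (by simp)), e1, e2]
    simp only [Finset.card_empty]
    omega
  have : darts r {x, y, z} ≤ 4 := by
    by_cases h1 : β x = β y
    · exact main x y z hxy hxz hyz h1 hβ
    · by_cases h2 : β x = β z
      · have e : ({x, y, z} : Finset V) = {x, z, y} := by ext; simp; tauto
        rw [e] at hβ ⊢
        exact main x z y hxz hxy hyz.symm h2 hβ
      · have h4 : β y = β z := by
          revert h1 h2; cases β x <;> cases β y <;> cases β z <;> simp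
        have e : ({x, y, z} : Finset V) = {y, z, x} := by ext; simp; tauto
        rw [e] at hβ ⊢
        exact main y z x hyz hxy.symm hxz.symm h4 hβ
  omega

set_option maxHeartbeats 1000000 in
/-- A bipartite graph on `n ≥ 3` vertices without `K₃,₃` minor has at most `2n - 4` edges.
In a minimal counterexample there is a vertex `v` of degree exactly three. Two of its neighbours
`a, b` either have at most one further common neighbour, and then identifying `a` with `b` and
deleting `v` gives a smaller counterexample, or they lie on a `4`-cycle avoiding `v`, which
separates the graph by `HasK33.of_conn_compl`. -/
lemma edge_bound (β : V → Bool) (N : ℕ) : ∀ (r : V → V → Prop) (S : Finset V),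
    (∀ x y, r x y → r y x) → (∀ x ∈ S, ∀ y ∈ S, r x y → β x ≠ β y) →
    ¬ HasK33 r (S : Set V) → 3 ≤ S.card → S.card + darts r S ≤ N →
    darts r S + 8 ≤ 4 * S.card := by
  induction N with
  | zero => intro r S _ _ _ h1 h2; omega
  | succ N IH =>
  intro r S hr hβ hK h3 hN
  by_contra! hcon
  have hirr : ∀ x ∈ S, ¬ r x x := fun x hx h => hβ x hx x hx h rfl
  rcases h3.eq_or_lt with h3 | h4
  · have := dart_le_of_cut hr hβ h3.symm
    omega
  -- every vertex has degree at least three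
  have hdeg : ∀ x ∈ S, 3 ≤ (nb r S x).card := by
    intro x hx
    by_contra! h
    have h1 := darts_erase hr hx (hirr x hx)
    have h2 := Finset.card_erase_of_mem hx
    have h5 := IH r (S.erase x) hr (fun y hy z hz => hβ y (Finset.mem_of_mem_erase hy) z
      (Finset.mem_of_mem_erase hz)) (fun h => hK (h.mono (by simp) fun _ _ _ _ h => h))
      (by omega) (by omega)
    omega
  -- some vertex has degree exactly three, for otherwise an edge could be deleted
  obtain ⟨v, hv, hv3⟩ : ∃ v ∈ S, (nb r S v).card = 3 := by
    by_contra! h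
    have h4S : 4 * S.card ≤ darts r S := by
      rw [darts_eq_sum, mul_comm, ← smul_eq_mul, ← Finset.sum_const]
      refine Finset.sum_le_sum fun x hx => ?_
      have := hdeg x hx
      have := h x hx
      omega
    obtain ⟨u, hu⟩ : S.Nonempty := Finset.card_pos.1 (by omega)
    obtain ⟨w, hw⟩ : (nb r S u).Nonempty := Finset.card_pos.1 (by have := hdeg u hu; omega)
    obtain ⟨hwS, huw⟩ := mem_nb.1 hw
    let r₂ : V → V → Prop := fun x y => r x y ∧ ¬ (x = u ∧ y = w ∨ x = w ∧ y = u)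
    have h5 : darts r S = darts r₂ S + 2 := by
      have hne : u ≠ w := fun h => hirr u hu (h ▸ huw)
      have hne2 : (u, w) ≠ (w, u) := fun h => hne (Prod.ext_iff.1 h).1
      rw [← Finset.card_pair hne2]
      unfold darts
      rw [← Finset.card_union_of_disjoint]
      · congr 1
        ext ⟨x, y⟩
        simp only [Finset.mem_filter, Finset.mem_product, Finset.mem_union, Finset.mem_insert,
          Finset.mem_singleton, Prod.mk.injEq, r₂]
        constructor
        · intro h; by_cases h' : (x = u ∧ y = w ∨ x = w ∧ y = u) <;> tauto
        · rintro (h | ⟨rfl, rfl⟩ | ⟨rfl, rfl⟩)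
          · tauto
          · exact ⟨⟨hu, hwS⟩, huw⟩
          · exact ⟨⟨hwS, hu⟩, hr _ _ huw⟩
      · rw [Finset.disjoint_left]
        rintro ⟨x, y⟩ h1 h2
        simp only [Finset.mem_filter, Finset.mem_insert, Finset.mem_singleton, Prod.mk.injEq,
          r₂] at h1 h2
        tauto
    have := IH r₂ S (fun x y h => ⟨hr _ _ h.1, by tauto⟩) (fun x hx y hy h => hβ x hx y hy h.1)
      (fun h => hK (h.mono subset_rfl fun _ _ _ _ h => h.1)) (by omega) (by omega)
    omega
  obtain ⟨a, b, c, hab, hac, hbc, habc⟩ := Finset.card_eq_three.1 hv3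
  have hN' : ∀ x, x ∈ S ∧ r v x ↔ x = a ∨ x = b ∨ x = c := fun x => by
    rw [← mem_nb, habc]; simp
  obtain ⟨ha, hva⟩ := (hN' a).2 (by simp)
  obtain ⟨hb, hvb⟩ := (hN' b).2 (by simp)
  obtain ⟨hc, hvc⟩ := (hN' c).2 (by simp)
  have bflip : ∀ {p q s : Bool}, p ≠ q → p ≠ s → q = s := by decide
  have hβab : β a = β b := bflip (hβ v hv a ha hva) (hβ v hv b hb hvb)
  have hβac : β a = β c := bflip (hβ v hv a ha hva) (hβ v hv c hc hvc)
  have hva' : v ≠ a := fun h => hirr a ha (by rw [← h] at hva ⊢; exact hva)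
  have hvb' : v ≠ b := fun h => hirr b hb (by rw [← h] at hvb ⊢; exact hvb)
  have hvc' : v ≠ c := fun h => hirr c hc (by rw [← h] at hvc ⊢; exact hvc)
  have hnab : ¬ r a b := fun h => hβ a ha b hb h hβab
  set T := ((S.erase v).erase b).erase a with hT
  have hTS : T ⊆ S := (Finset.erase_subset _ _).trans
    ((Finset.erase_subset _ _).trans (Finset.erase_subset _ _))
  have memT : ∀ x, x ∈ T ↔ x ≠ a ∧ x ≠ b ∧ x ≠ v ∧ x ∈ S := fun x => by simp [hT]
  by_cases hK1 : (nb r T a ∩ nb r T b).card ≤ 1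
  · -- identify `b` with `a`
    let r' : V → V → Prop := fun x y => r x y ∨ (x = a ∧ r b y) ∨ (y = a ∧ r x b)
    have hr' : ∀ x y, r' x y → r' y x := by
      rintro x y (h | ⟨h, h'⟩ | ⟨h, h'⟩)
      · exact .inl (hr _ _ h)
      · exact .inr (.inr ⟨h, hr _ _ h'⟩)
      · exact .inr (.inl ⟨h, hr _ _ h'⟩)
    have hbe : b ∈ S.erase v := Finset.mem_erase.2 ⟨hvb'.symm, hb⟩
    have hae : a ∈ (S.erase v).erase b :=
      Finset.mem_erase.2 ⟨hab, Finset.mem_erase.2 ⟨hva'.symm, ha⟩⟩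
    have hS'' : ∀ x ∈ (S.erase v).erase b, x ∈ S := fun x hx =>
      Finset.mem_of_mem_erase (Finset.mem_of_mem_erase hx)
    have hβ' : ∀ x ∈ (S.erase v).erase b, ∀ y ∈ (S.erase v).erase b, r' x y → β x ≠ β y := by
      rintro x hx y hy (h | ⟨rfl, h⟩ | ⟨rfl, h⟩)
      · exact hβ x (hS'' x hx) y (hS'' y hy) h
      · rw [hβab]; exact hβ b hb y (hS'' y hy) h
      · rw [hβab]; exact hβ x (hS'' x hx) b hb h
    have e1 := darts_erase hr hv (hirr v hv)
    have e2 := darts_erase hr hbe (hirr b hb)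
    have e3 := darts_erase hr hae (hirr a ha)
    have e4 := darts_erase hr' hae (fun h => hβ' a hae a hae h rfl)
    rw [← hT] at e3 e4
    have e5 : darts r' T ≤ darts r T := darts_mono subset_rfl fun x hx y hy h => by
      have hx' := (memT x).1 hx
      have hy' := (memT y).1 hy
      rcases h with h | ⟨h, -⟩ | ⟨h, -⟩
      · exact h
      · exact absurd h hx'.1
      · exact absurd h hy'.1
    have e5' : darts r T ≤ darts r' T := darts_mono subset_rfl fun x hx y hy h => .inl h
    have e6 : nb r (S.erase v) b = nb r T b := by
      ext x
      simp only [mem_nb, memT, Finset.mem_erase]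
      constructor
      · rintro ⟨⟨h1, h2⟩, h3⟩
        refine ⟨⟨?_, ?_, h1, h2⟩, h3⟩
        · rintro rfl; exact hnab (hr _ _ h3)
        · rintro rfl; exact hirr _ hb h3
      · tauto
    have e7 : nb r ((S.erase v).erase b) a = nb r T a := by
      ext x
      simp only [mem_nb, memT, Finset.mem_erase]
      constructor
      · rintro ⟨⟨h1, h2⟩, h3⟩
        refine ⟨⟨?_, h1, h2⟩, h3⟩
        rintro rfl; exact hirr _ ha h3
      · tauto
    have e8 : nb r' ((S.erase v).erase b) a = nb r T a ∪ nb r T b := by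
      ext x
      simp only [mem_nb, memT, Finset.mem_erase, Finset.mem_union, r']
      constructor
      · rintro ⟨⟨h1, h2, h5⟩, h3⟩
        have hxa : x ≠ a := by
          intro hxa
          exact hβ' a hae a hae (by rw [hxa] at h3; simpa [r'] using h3) rfl
        rcases h3 with h3 | ⟨-, h3⟩ | ⟨h3, -⟩
        · exact .inl ⟨⟨hxa, h1, h2, h5⟩, h3⟩
        · exact .inr ⟨⟨hxa, h1, h2, h5⟩, h3⟩
        · exact absurd h3 hxa
      · tauto
    have e9 := Finset.card_union_add_card_inter (nb r T a) (nb r T b)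
    have c1 := Finset.card_erase_of_mem hv
    have c2 := Finset.card_erase_of_mem hbe
    have c3 : 6 ≤ S.card := by
      have hd : Disjoint (nb r S v) (nb r S a) := by
        rw [Finset.disjoint_left]
        intro x hx hx'
        rw [mem_nb] at hx hx'
        exact hβ a ha x hx.1 hx'.2 (bflip (hβ v hv a ha hva) (hβ v hv x hx.1 hx.2))
      have h1 := Finset.card_le_card (Finset.union_subset (nb_subset (r := r) S v) (nb_subset (r := r) S a))
      rw [Finset.card_union_of_disjoint hd] at h1
      have := hdeg a ha
      omega
    rw [e6] at e2
    rw [e7] at e3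
    rw [e8] at e4
    have := IH r' ((S.erase v).erase b) hr' hβ' (fun h => hK (h.of_identify (b := b) (v := v) hr
      ha hb hv hva hvb (fun x hx => hS'' x (Finset.mem_coe.1 hx)) (by simp) (by simp)
      (fun x _ y _ h => h))) (by omega) (by omega)
    omega
  · -- a `4`-cycle `a w₁ b w₂`
    obtain ⟨w₁, hw₁, w₂, hw₂, hw⟩ := Finset.one_lt_card.1 (not_le.1 hK1)
    simp only [Finset.mem_inter, mem_nb, memT] at hw₁ hw₂
    obtain ⟨⟨⟨h1a, h1b, h1v, h1S⟩, haw₁⟩, -, hbw₁⟩ := hw₁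
    obtain ⟨⟨⟨h2a, h2b, h2v, h2S⟩, haw₂⟩, -, hbw₂⟩ := hw₂
    have hβw : β w₁ = β w₂ := bflip (hβ a ha w₁ h1S haw₁) (hβ a ha w₂ h2S haw₂)
    have hβv : β v = β w₁ := bflip (hβ v hv a ha hva).symm (hβ a ha w₁ h1S haw₁)
    have h1c : w₁ ≠ c := fun h => hβ a ha w₁ h1S haw₁ (h ▸ hβac)
    have h2c : w₂ ≠ c := fun h => hβ a ha w₂ h2S haw₂ (h ▸ hβac)
    set C : Finset V := {a, b, w₁, w₂} with hC
    have memC : ∀ x, x ∈ C ↔ x = a ∨ x = b ∨ x = w₁ ∨ x = w₂ := fun x => by simp [hC]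
    have hx : ∀ w ∈ S, β w = β w₁ → ∃ x ∈ (S : Set V) \ {a, b, w₁, w₂}, x ≠ v ∧ r x w := by
      intro w hwS hww
      obtain ⟨x, hx, hx'⟩ : ∃ x ∈ nb r S w, x ∉ ({a, b} : Finset V) := by
        by_contra! h
        have := Finset.card_le_card (show nb r S w ⊆ {a, b} from h)
        rw [Finset.card_pair hab] at this
        have := hdeg w hwS
        omega
      simp only [Finset.mem_insert, Finset.mem_singleton, not_or, mem_nb] at hx hx'
      have hbx := hβ w hwS x hx.1 hx.2
      refine ⟨x, ⟨hx.1, ?_⟩, ?_, hr _ _ hx.2⟩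
      · rintro (h | h | h | h)
        · exact hx'.1 h
        · exact hx'.2 h
        · exact hbx (by rw [hww, h])
        · rw [Set.mem_singleton_iff] at h
          exact hbx (by rw [hww, h, hβw])
      · intro h; exact hbx (by rw [hww, h, hβv])
    obtain ⟨x₁, hx₁, hx₁v, hx₁w⟩ := hx w₁ h1S rfl
    obtain ⟨x₂, hx₂, hx₂v, hx₂w⟩ := hx w₂ h2S hβw.symm
    have hnc : ¬ Conn r ((S \ C : Finset V) : Set V) := by
      intro h
      refine hK (HasK33.of_conn_compl hr (c := c) hv ha hb hc h1S h2S
        (fun x hx h => (hN' x).1 ⟨hx, h⟩) hva hvb hvc haw₁ hbw₁ haw₂ hbw₂ ?_ hx₁ hx₂ hx₁v hx₂v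
        hx₁w hx₂w ?_)
      · simp [hva', hvb', hvc', hab, hac, hbc, h1a.symm, h1b.symm, h1c.symm, h1v.symm,
          h2a.symm, h2b.symm, h2c.symm, h2v.symm, hw]
      · rw [Finset.coe_sdiff, hC] at h
        simpa using h
    have hvR : v ∈ S \ C := by
      simp [memC, hv, hva', hvb', h1v.symm, h2v.symm]
    obtain ⟨y, hyR, hyD⟩ := exists_not_mem_comp hr hvR hnc
    set D := comp r (S \ C) v with hD
    have hDR : D ⊆ S \ C := comp_subset _ _
    have hCS : C ⊆ S := fun x hx => by
      rcases (memC x).1 hx with rfl | rfl | rfl | rfl <;> assumption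
    have hCcard : C.card = 4 := by
      rw [hC, Finset.card_insert_of_notMem, Finset.card_insert_of_notMem, Finset.card_pair hw]
      · simp [h1b.symm, h2b.symm]
      · simp [hab, h1a.symm, h2a.symm]
    obtain ⟨hu, hi, hcut⟩ := comp_cut hr hCS hD
    have hg := darts_glue (r := r) (S₁ := C ∪ D) (S₂ := S \ D) (by rw [hu]; exact hcut)
    rw [hu, hi] at hg
    have h8 : 8 ≤ darts r C := by
      have := eight_le_darts (r := fun x y => r x y ∧ x ∈ S ∧ y ∈ S)
        (fun x y h => ⟨hr _ _ h.1, h.2.2, h.2.1⟩) (fun x h => hirr x h.2.1 h.1) hab hw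
        ⟨haw₁, ha, h1S⟩ ⟨hbw₁, hb, h1S⟩ ⟨haw₂, ha, h2S⟩ ⟨hbw₂, hb, h2S⟩
      exact this.trans (darts_mono subset_rfl fun x _ y _ h => h.1)
    have hvD : v ∈ D := self_mem_comp hvR
    have hs1 : C ∪ D ⊆ S := Finset.union_subset hCS (hDR.trans Finset.sdiff_subset)
    have hs2 : S \ D ⊆ S := Finset.sdiff_subset
    have hc1 : (C ∪ D).card + (S \ D).card = S.card + 4 := by
      rw [← hCcard, ← Finset.card_union_add_card_inter, hu, hi]
    have hC1 : C.card ≤ (C ∪ D).card := Finset.card_le_card Finset.subset_union_left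
    have hD1 : 1 ≤ D.card := Finset.card_pos.2 ⟨v, hvD⟩
    have hy1 : (C ∪ D).card < S.card := Finset.card_lt_card
      ⟨hs1, fun h => by
        rcases Finset.mem_union.1 (h (Finset.mem_sdiff.1 hyR).1) with h | h
        · exact (Finset.mem_sdiff.1 hyR).2 h
        · exact hyD h⟩
    have hy2 : (S \ D).card < S.card := Finset.card_lt_card
      ⟨hs2, fun h => (Finset.mem_sdiff.1 (h hv)).2 hvD⟩
    have hd1 : darts r (C ∪ D) ≤ darts r S := darts_mono hs1 fun _ _ _ _ h => h
    have hd2 : darts r (S \ D) ≤ darts r S := darts_mono hs2 fun _ _ _ _ h => h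
    have i1 := IH r (C ∪ D) hr (fun x hx y hy => hβ x (hs1 hx) y (hs1 hy))
      (fun h => hK (h.mono (Finset.coe_subset.2 hs1) fun _ _ _ _ h => h)) (by omega) (by omega)
    have i2 := IH r (S \ D) hr (fun x hx y hy => hβ x (hs2 hx) y (hs2 hy))
      (fun h => hK (h.mono (Finset.coe_subset.2 hs2) fun _ _ _ _ h => h)) (by omega) (by omega)
    omega

end EdgeBound

/-! ### Switchings with heights -/

section Pushing

open scoped Classical

variable {V : Type*}

/-- A pair of a switching `s` (a sign for every vertex) and a height function `y` such that every
edge `uv` in `S` has a height difference `y v - y u` of the sign of `τ u v * s u * s v`. Here `τ`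
is an antisymmetric weight whose nonzero entries are the edges; only its signs matter. -/
def Sol (S : Finset V) (τ : V → V → ℝ) (s y : V → ℝ) : Prop :=
  (∀ x, s x = 1 ∨ s x = -1) ∧
    ∀ u ∈ S, ∀ v ∈ S, τ u v ≠ 0 → 0 < τ u v * (s u * s v) * (y v - y u)

lemma Sol.mono {S S' : Finset V} {τ τ' : V → V → ℝ} {s y : V → ℝ} (h : Sol S τ s y)
    (hS : S' ⊆ S) (hτ : ∀ x ∈ S', ∀ z ∈ S', τ' x z ≠ 0 → τ' x z = τ x z) : Sol S' τ' s y :=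
  ⟨h.1, fun u hu v hv huv => by
    have e := hτ u hu v hv huv
    rw [e]
    exact h.2 u (hS hu) v (hS hv) (e ▸ huv)⟩

lemma Sol.of_order {S : Finset V} {τ : V → V → ℝ} {s y s' y' : V → ℝ} (h : Sol S τ s y)
    (hs : ∀ x, s' x = 1 ∨ s' x = -1) (hss : ∀ x ∈ S, s' x = s x)
    (hy : ∀ u ∈ S, ∀ v ∈ S, τ u v ≠ 0 → y u < y v → y' u < y' v)
    (hτ : ∀ x z, τ z x = -τ x z) : Sol S τ s' y' := by
  refine ⟨hs, fun u hu v hv huv => ?_⟩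
  rw [hss u hu, hss v hv]
  have h1 := h.2 u hu v hv huv
  rcases pos_and_pos_or_neg_and_neg_of_mul_pos h1 with ⟨h2, h3⟩ | ⟨h2, h3⟩
  · exact mul_pos h2 (sub_pos.2 (hy u hu v hv huv (sub_pos.1 h3)))
  · exact mul_pos_of_neg_of_neg h2 (sub_neg.2 (hy v hv u hu
      (by rw [hτ u v]; exact neg_ne_zero.2 huv) (sub_neg.1 h3)))

/-- To extend a solution to a vertex `v` all of whose neighbours but one have the same height
`α`, put `v` at height `α`, choose its sign to satisfy the edge to the exceptional neighbour, and
move the neighbours at height `α` slightly up or down. -/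
lemma Sol.extend {S : Finset V} {τ : V → V → ℝ} (hτ : ∀ x z, τ z x = -τ x z) {v : V}
    {s y : V → ℝ} (h : Sol (S.erase v) τ s y) (α : ℝ) (c : V)
    (hN : ∀ x ∈ S, τ v x ≠ 0 → y x = α ∨ x = c) : ∃ s' y', Sol S τ s' y' := by
  have hvv : τ v v = 0 := by have := hτ v v; linarith
  set σ : ℝ := if 0 < τ v c * s c * (y c - α) then 1 else -1 with hσ
  have hσ1 : σ = 1 ∨ σ = -1 := by rw [hσ]; split_ifs <;> simp
  have hσ2 : τ v c ≠ 0 → y c ≠ α → 0 < τ v c * (σ * s c) * (y c - α) := by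
    intro h1 h2
    have hsc : s c ≠ 0 := by rcases h.1 c with h | h <;> rw [h] <;> norm_num
    have h3 : τ v c * s c * (y c - α) ≠ 0 := mul_ne_zero (mul_ne_zero h1 hsc) (sub_ne_zero.2 h2)
    rw [hσ]
    split_ifs with h4
    · linarith
    · have := lt_of_le_of_ne (not_lt.1 h4) h3
      linarith
  let d : V → ℝ := fun x => if y x = α then τ v x * (σ * s x) else 0
  have hev : ∀ᶠ ε in nhdsWithin (0 : ℝ) (Set.Ioi 0), ∀ u ∈ S.erase v, ∀ w ∈ S.erase v,
      τ u w ≠ 0 → 0 < τ u w * (s u * s w) * ((y w + ε * d w) - (y u + ε * d u)) := by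
    simp only [Filter.eventually_all_finset]
    intro u hu w hw
    by_cases huw : τ u w = 0
    · exact Filter.Eventually.of_forall fun _ h => absurd huw h
    have hcont : ContinuousAt
        (fun ε : ℝ => τ u w * (s u * s w) * ((y w + ε * d w) - (y u + ε * d u))) 0 := by fun_prop
    have h0 := h.2 u hu w hw huw
    have := hcont.eventually (lt_mem_nhds (a := 0) (by simpa using h0))
    filter_upwards [nhdsWithin_le_nhds this] with ε hε _ using hε
  obtain ⟨ε, hε, hε0⟩ := (hev.and self_mem_nhdsWithin).exists
  have hε0 : 0 < ε := hε0
  let s' : V → ℝ := fun x => if x = v then σ else s x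
  let y' : V → ℝ := fun x => if x = v then α else y x + ε * d x
  have hedge : ∀ x ∈ S, x ≠ v → τ v x ≠ 0 → 0 < τ v x * (s' v * s' x) * (y' x - y' v) := by
    intro x hx hxv hvx
    have e1 : s' v = σ := if_pos rfl
    have e2 : y' v = α := if_pos rfl
    have e3 : s' x = s x := if_neg hxv
    have e4 : y' x = y x + ε * d x := if_neg hxv
    rw [e1, e2, e3, e4]
    by_cases hyx : y x = α
    · have e5 : d x = τ v x * (σ * s x) := if_pos hyx
      have hne : τ v x * (σ * s x) ≠ 0 := by
        refine mul_ne_zero hvx (mul_ne_zero ?_ ?_)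
        · rcases hσ1 with h | h <;> rw [h] <;> norm_num
        · rcases h.1 x with h | h <;> rw [h] <;> norm_num
      rw [e5, hyx]
      have := mul_pos hε0 (sq_pos_of_ne_zero hne)
      linarith
    · have e5 : d x = 0 := if_neg hyx
      obtain rfl := (hN x hx hvx).resolve_left hyx
      rw [e5, mul_zero, add_zero]
      exact hσ2 hvx hyx
  refine ⟨s', y', fun x => ?_, fun u hu w hw huw => ?_⟩
  · by_cases hx : x = v
    · simp only [s', if_pos hx]; exact hσ1
    · simp only [s', if_neg hx]; exact h.1 x
  · by_cases huv : u = v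
    · subst huv
      have hwu : w ≠ u := fun h => huw (h ▸ hvv)
      exact hedge w hw hwu huw
    · by_cases hwv : w = v
      · subst hwv
        have hwu : τ w u ≠ 0 := by rw [hτ u w]; exact neg_ne_zero.2 huw
        have := hedge u hu huv hwu
        rw [hτ u w] at this
        linarith
      · have := hε u (Finset.mem_erase.2 ⟨huv, hu⟩) w (Finset.mem_erase.2 ⟨hwv, hw⟩) huw
        simp only [s', y', if_neg huv, if_neg hwv]
        exact this

lemma Sol.edge_pos {S : Finset V} {τ : V → V → ℝ} {s y : V → ℝ} (h : Sol S τ s y) {u v : V}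
    (hu : u ∈ S) (hv : v ∈ S) (huv : τ u v ≠ 0) : 0 < τ u v * (s u * s v) * (y v - y u) :=
  h.2 u hu v hv huv

/-- Any vertex can be moved to the bottom with sign `1`: the vertices below it are switched and
moved to the top. -/
lemma Sol.normalize {S : Finset V} {τ : V → V → ℝ} {s y : V → ℝ}
    (h : Sol S τ s y) {a : V} (ha : a ∈ S) :
    ∃ s' y', Sol S τ s' y' ∧ s' a = 1 ∧ ∀ x ∈ S, y' a ≤ y' x := by
  obtain ⟨M, hM⟩ : ∃ M : ℝ, ∀ u ∈ S, ∀ w ∈ S, y w - y u < M := by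
    obtain ⟨M, hM⟩ := ((S ×ˢ S).image fun e => y e.2 - y e.1).bddAbove
    refine ⟨M + 1, fun u hu w hw => ?_⟩
    have := hM (Finset.mem_coe.2 (Finset.mem_image_of_mem (fun e : V × V => y e.2 - y e.1)
      (Finset.mk_mem_product hu hw)))
    dsimp only at this
    linarith
  let s₁ : V → ℝ := fun x => if y x < y a then -s x else s x
  let y₁ : V → ℝ := fun x => if y x < y a then y x + M else y x
  have hs₁ : ∀ x, s₁ x = 1 ∨ s₁ x = -1 := fun x => by
    simp only [s₁]
    rcases h.1 x with h | h <;> split_ifs <;> simp [h]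
  have hsa : s₁ a * s₁ a = 1 := by rcases hs₁ a with h | h <;> rw [h] <;> norm_num
  refine ⟨fun x => s₁ x * s₁ a, y₁, ⟨fun x => ?_, fun u hu w hw huw => ?_⟩, hsa, fun x hx => ?_⟩
  · rcases hs₁ x with h | h <;> rcases hs₁ a with h' | h' <;> simp [h, h']
  · have e : s₁ u * s₁ a * (s₁ w * s₁ a) = s₁ u * s₁ w := by
      linear_combination (s₁ u * s₁ w) * hsa
    rw [e]
    have h0 := h.2 u hu w hw huw
    have h1 := hM u hu w hw
    have h2 := hM w hw u hu
    simp only [s₁, y₁]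
    split_ifs with h3 h4 h4
    · linarith
    · have h5 : 0 < τ u w * (s u * s w) := pos_of_mul_pos_left h0 (by linarith)
      have := mul_pos h5 (show 0 < M - (y w - y u) by linarith)
      linarith
    · have h5 : 0 < -(τ u w * (s u * s w)) := pos_of_mul_pos_left
        (show 0 < -(τ u w * (s u * s w)) * (y u - y w) by linarith) (by linarith)
      have := mul_pos h5 (show 0 < M - (y u - y w) by linarith)
      linarith
    · exact h0
  · have h1 := hM x hx a ha
    simp only [y₁, lt_irrefl, if_false]
    split_ifs with h3
    · linarith
    · exact not_lt.1 h3

/-- The integral part of the heights used in `Sol.glue`: the rank of `x` relative to `T`. -/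
noncomputable def rank (T : Finset V) (y : V → ℝ) (x : V) : ℝ :=
  ((T.filter fun t => y t < y x).card + (T.filter fun t => y t ≤ y x).card : ℕ)

/-- Heights adapted to `T`: elements of `T` are placed at the integer `rank`, and the others
within distance less than `1/2` of theirs. -/
noncomputable def rankHeight (T : Finset V) (y : V → ℝ) (x : V) : ℝ :=
  rank T y x + if x ∈ T then 0 else Real.arctan (y x) / Real.pi

lemma rankHeight_lt (T : Finset V) (y : V → ℝ) {u w : V} (h : y u < y w) :
    rankHeight T y u < rankHeight T y w := by
  have h1 : (T.filter fun t => y t < y u) ⊆ T.filter fun t => y t < y w := fun t ht => by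
    rw [Finset.mem_filter] at ht ⊢; exact ⟨ht.1, ht.2.trans h⟩
  have h2 : (T.filter fun t => y t ≤ y u) ⊆ T.filter fun t => y t ≤ y w := fun t ht => by
    rw [Finset.mem_filter] at ht ⊢; exact ⟨ht.1, ht.2.trans h.le⟩
  have hb : ∀ x, -(1 / 2) < (if x ∈ T then 0 else Real.arctan (y x) / Real.pi) ∧
      (if x ∈ T then 0 else Real.arctan (y x) / Real.pi) < 1 / 2 := fun x => by
    split_ifs
    · norm_num
    · rw [lt_div_iff₀ Real.pi_pos, div_lt_iff₀ Real.pi_pos]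
      have := Real.neg_pi_div_two_lt_arctan (y x)
      have := Real.arctan_lt_pi_div_two (y x)
      constructor <;> linarith
  have hjump : u ∈ T ∨ w ∈ T → rank T y u + 1 ≤ rank T y w := by
    intro huw
    unfold rank
    rw [← Nat.cast_add_one, Nat.cast_le]
    rcases huw with hu | hw
    · have := Finset.card_lt_card (Finset.ssubset_iff_subset_ne.2 ⟨h1, fun e => by
        have : u ∈ T.filter fun t => y t < y w := Finset.mem_filter.2 ⟨hu, h⟩
        rw [← e, Finset.mem_filter] at this
        exact lt_irrefl _ this.2⟩)
      have := Finset.card_le_card h2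
      omega
    · have := Finset.card_lt_card (Finset.ssubset_iff_subset_ne.2 ⟨h2, fun e => by
        have : w ∈ T.filter fun t => y t ≤ y w := Finset.mem_filter.2 ⟨hw, le_rfl⟩
        rw [← e, Finset.mem_filter] at this
        exact not_lt.2 this.2 h⟩)
      have := Finset.card_le_card h1
      omega
  unfold rankHeight
  by_cases huw : u ∈ T ∨ w ∈ T
  · have := hjump huw
    have b1 := hb u
    have b2 := hb w
    by_cases hu : u ∈ T
    · rw [if_pos hu] at b1 ⊢
      linarith
    · have hw : w ∈ T := huw.resolve_left hu
      rw [if_pos hw] at b2 ⊢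
      linarith
  · rw [not_or] at huw
    rw [if_neg huw.1, if_neg huw.2]
    have e1 : rank T y u ≤ rank T y w := by
      unfold rank
      exact_mod_cast add_le_add (Finset.card_le_card h1) (Finset.card_le_card h2)
    have e2 : Real.arctan (y u) / Real.pi < Real.arctan (y w) / Real.pi :=
      div_lt_div_of_pos_right (Real.arctan_strictMono h) Real.pi_pos
    linarith

/-- Two solutions that agree in sign and in relative order on the overlap can be glued. -/
lemma Sol.glue {S₁ S₂ : Finset V} {τ : V → V → ℝ} (hτ : ∀ x z, τ z x = -τ x z)
    {s₁ y₁ s₂ y₂ : V → ℝ}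
    (h : ∀ x ∈ S₁ ∪ S₂, ∀ z ∈ S₁ ∪ S₂, τ x z ≠ 0 → (x ∈ S₁ ∧ z ∈ S₁) ∨ (x ∈ S₂ ∧ z ∈ S₂))
    (h₁ : Sol S₁ τ s₁ y₁) (h₂ : Sol S₂ τ s₂ y₂) (hs : ∀ x ∈ S₁ ∩ S₂, s₁ x = s₂ x)
    (ho : ∀ x ∈ S₁ ∩ S₂, ∀ z ∈ S₁ ∩ S₂, y₁ x < y₁ z ↔ y₂ x < y₂ z) :
    ∃ s y, Sol (S₁ ∪ S₂) τ s y := by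
  let s : V → ℝ := fun x => if x ∈ S₁ then s₁ x else s₂ x
  let y : V → ℝ := fun x => if x ∈ S₁ then rankHeight (S₁ ∩ S₂) y₁ x
    else rankHeight (S₁ ∩ S₂) y₂ x
  have hs1 : ∀ x, s x = 1 ∨ s x = -1 := fun x => by
    simp only [s]; split_ifs
    · exact h₁.1 x
    · exact h₂.1 x
  have hrank : ∀ x ∈ S₁ ∩ S₂, rankHeight (S₁ ∩ S₂) y₁ x = rankHeight (S₁ ∩ S₂) y₂ x := by
    intro x hx
    unfold rankHeight rank
    rw [if_pos hx, if_pos hx]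
    congr 4
    · exact Finset.filter_congr fun t ht => ho t ht x hx
    · exact Finset.filter_congr fun t ht => by
        rw [← not_lt, ← not_lt, ho x hx t ht]
  have e₁ : ∀ x ∈ S₁, y x = rankHeight (S₁ ∩ S₂) y₁ x := fun x hx => if_pos hx
  have e₂ : ∀ x ∈ S₂, y x = rankHeight (S₁ ∩ S₂) y₂ x := fun x hx => by
    by_cases hx1 : x ∈ S₁
    · rw [e₁ x hx1, hrank x (Finset.mem_inter.2 ⟨hx1, hx⟩)]
    · exact if_neg hx1
  have k₁ : Sol S₁ τ s y := h₁.of_order hs1 (fun x hx => if_pos hx) (fun u hu v hv _ huv => by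
    rw [e₁ u hu, e₁ v hv]; exact rankHeight_lt _ _ huv) hτ
  have k₂ : Sol S₂ τ s y := h₂.of_order hs1 (fun x hx => by
    by_cases hx1 : x ∈ S₁
    · simp only [s, if_pos hx1]; exact hs x (Finset.mem_inter.2 ⟨hx1, hx⟩)
    · exact if_neg hx1) (fun u hu v hv _ huv => by
    rw [e₂ u hu, e₂ v hv]; exact rankHeight_lt _ _ huv) hτ
  refine ⟨s, y, hs1, fun u hu v hv huv => ?_⟩
  rcases h u hu v hv huv with ⟨h1, h2⟩ | ⟨h1, h2⟩
  · exact k₁.2 u h1 v h2 huv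
  · exact k₂.2 u h1 v h2 huv

/-! ### Identification of vertices and gluing along cycles -/

/-- The situation handled by induction: `τ` is antisymmetric, every edge in `S` other than `pq`
joins two different classes of `β`, and there is no `K₃,₃` minor inside `S`. One exceptional edge
has to be allowed because `Good.separate` adds an edge between two vertices of the same class. -/
structure Good (β : V → Bool) (S : Finset V) (τ : V → V → ℝ) (p q : V) : Prop where
  antisymm : ∀ x z, τ z x = -τ x z
  bip : ∀ x ∈ S, ∀ z ∈ S, τ x z ≠ 0 → β x ≠ β z ∨ s(x, z) = s(p, q)
  noMinor : ¬ HasK33 (fun x z => τ x z ≠ 0) (S : Set V)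

section

variable {β : V → Bool} {S : Finset V} {τ : V → V → ℝ} {p q : V}

lemma Good.mono (h : Good β S τ p q) {T : Finset V} (hT : T ⊆ S) : Good β T τ p q :=
  ⟨h.antisymm, fun x hx z hz => h.bip x (hT hx) z (hT hz),
    fun hK => h.noMinor (hK.mono (Finset.coe_subset.2 hT) fun _ _ _ _ h => h)⟩

lemma Good.symm (h : Good β S τ p q) {x z : V} (hxz : τ x z ≠ 0) : τ z x ≠ 0 := by
  rw [h.antisymm x z]; exact neg_ne_zero.2 hxz

lemma Good.self (h : Good β S τ p q) (x : V) : τ x x = 0 := by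
  have := h.antisymm x x; linarith

lemma Good.ne (h : Good β S τ p q) {x z : V} (hxz : τ x z ≠ 0) : x ≠ z :=
  fun e => hxz (e ▸ h.self x)

/-- The weight obtained from `τ` by identifying `b` with `a`, after switching `b` if `κ = -1`. -/
noncomputable def ident (τ : V → V → ℝ) (κ : ℝ) (a b : V) (x z : V) : ℝ :=
  τ x z + (if x = a then κ * τ b z else 0) + (if z = a then κ * τ x b else 0)

lemma ident_ne {κ : ℝ} {a b x z : V} (h : ident τ κ a b x z ≠ 0) :
    τ x z ≠ 0 ∨ (x = a ∧ τ b z ≠ 0) ∨ (z = a ∧ τ x b ≠ 0) := by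
  by_contra! hcon
  refine h ?_
  unfold ident
  rw [hcon.1]
  split_ifs with h1 h2 h2
  · rw [hcon.2.1 h1, hcon.2.2 h2]; ring
  · rw [hcon.2.1 h1]; ring
  · rw [hcon.2.2 h2]; ring
  · ring

/-- If no common neighbour of `a` and `b` sees them with opposite signs, up to a switch `κ` of
`b`, then a solution after the identification of `b` with `a` gives one with `a` and `b` at the
same height. -/
lemma Sol.of_ident (hτ : ∀ x z, τ z x = -τ x z) {κ : ℝ} (hκ1 : κ = 1 ∨ κ = -1) {a b : V}
    (hab : a ≠ b) (hτab : τ a b = 0) (hκ : ∀ x ∈ S, 0 ≤ κ * (τ a x * τ b x)) {s y : V → ℝ}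
    (h : Sol (S.erase b) (ident τ κ a b) s y) (ha : a ∈ S) :
    ∃ s' y', Sol S τ s' y' ∧ y' b = y' a := by
  have hself : ∀ x, τ x x = 0 := fun x => by have := hτ x x; linarith
  have hτba : τ b a = 0 := by rw [hτ a b, hτab, neg_zero]
  have hκκ : κ * κ = 1 := by rcases hκ1 with h | h <;> rw [h] <;> norm_num
  let φ : V → V := fun x => if x = b then a else x
  let k : V → ℝ := fun x => if x = b then κ else 1
  have hk : ∀ x, k x = 1 ∨ k x = -1 := fun x => by
    simp only [k]; split_ifs
    · exact hκ1
    · exact .inl rfl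
  have hφ : ∀ x ∈ S, φ x ∈ S.erase b := fun x hx => by
    simp only [φ]; split_ifs with hxb
    · exact Finset.mem_erase.2 ⟨hab, ha⟩
    · exact Finset.mem_erase.2 ⟨hxb, hx⟩
  have key : ∀ u ∈ S, ∀ w ∈ S, τ u w ≠ 0 →
      0 < τ u w * (k u * k w) * ident τ κ a b (φ u) (φ w) := by
    intro u hu w hw huw
    have hsq : 0 < τ u w * τ u w := mul_self_pos.2 huw
    have ku := hκ u hu
    have kw := hκ w hw
    have e1 := hτ a u
    have e2 := hτ b u
    have hba := hab.symm
    by_cases hub : u = b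
    · subst hub
      by_cases hwb : w = u
      · exact absurd (hwb ▸ hself u) huw
      by_cases hwa : w = a
      · exact absurd (hwa ▸ hτba) huw
      simp only [φ, k, ident, if_neg hwb, if_neg hwa, if_true]
      have : κ * κ * (τ u w * τ u w) = τ u w * τ u w := by rw [hκκ, one_mul]
      linarith
    · by_cases hwb : w = b
      · subst hwb
        by_cases hua : u = a
        · exact absurd (hua ▸ hτab) huw
        simp only [φ, k, ident, if_neg hub, if_neg hua, if_true]
        have h1 : κ * κ * (τ u w * τ u w) = τ u w * τ u w := by rw [hκκ, one_mul]
        have h2 : κ * (τ u a * τ u w) = κ * (τ a u * τ w u) := by rw [e1, e2]; ring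
        linarith
      · by_cases hua : u = a
        · subst hua
          have hwa : w ≠ u := fun e => huw (e ▸ hself u)
          simp only [φ, k, ident, if_neg hub, if_neg hwb, if_neg hwa, if_true]
          linarith
        · by_cases hwa : w = a
          · subst hwa
            simp only [φ, k, ident, if_neg hub, if_neg hwb, if_neg hua, if_true]
            have h2 : κ * (τ u w * τ u b) = κ * (τ w u * τ b u) := by rw [e1, e2]; ring
            linarith
          · simp only [φ, k, ident, if_neg hub, if_neg hwb, if_neg hua, if_neg hwa]
            linarith
  refine ⟨fun x => k x * s (φ x), fun x => y (φ x), ⟨fun x => ?_, fun u hu w hw huw => ?_⟩, ?_⟩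
  · rcases hk x with h1 | h1 <;> rcases h.1 (φ x) with h2 | h2 <;> simp [h1, h2]
  · have h1 := key u hu w hw huw
    have h2 := h.2 _ (hφ u hu) _ (hφ w hw) fun e => by rw [e, mul_zero] at h1; exact lt_irrefl _ h1
    have h3 := mul_pos h1 h2
    set t := ident τ κ a b (φ u) (φ w)
    have h4 : 0 < t * t * (τ u w * (k u * s (φ u) * (k w * s (φ w))) * (y (φ w) - y (φ u))) := by
      linarith
    exact pos_of_mul_pos_right h4 (mul_self_nonneg t)
  · simp only [φ, if_true, if_neg hab]

lemma Good.identify (h : Good β S τ p q)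
    (IH : ∀ T τ' p' q', T.card < S.card → Good β T τ' p' q' → ∃ s y, Sol T τ' s y)
    {v a b c : V} (hv : v ∈ S) (hN : ∀ x ∈ S, τ v x ≠ 0 → x = a ∨ x = b ∨ x = c)
    (ha : a ∈ S) (hb : b ∈ S) (hva : τ v a ≠ 0) (hvb : τ v b ≠ 0) (hab : a ≠ b)
    (hβ : β a = β b) (hτab : τ a b = 0) {κ : ℝ} (hκ1 : κ = 1 ∨ κ = -1)
    (hκ : ∀ x ∈ S, x ≠ v → 0 ≤ κ * (τ a x * τ b x)) : ∃ s y, Sol S τ s y := by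
  have hT : ∀ x, x ∈ (S.erase v).erase b ↔ x ≠ b ∧ x ≠ v ∧ x ∈ S := fun x => by simp
  have hG : Good β ((S.erase v).erase b) (ident τ κ a b) (if p = b then a else p)
      (if q = b then a else q) := by
    refine ⟨fun x z => ?_, fun x hx z hz hxz => ?_, fun hK => h.noMinor ?_⟩
    · unfold ident
      rw [h.antisymm x z, h.antisymm z b, h.antisymm b x]
      split_ifs <;> ring
    · rw [hT] at hx hz
      rcases ident_ne hxz with h1 | ⟨rfl, h1⟩ | ⟨rfl, h1⟩
      · refine (h.bip x hx.2.2 z hz.2.2 h1).imp_right fun h2 => ?_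
        rcases Sym2.eq_iff.1 h2 with ⟨rfl, rfl⟩ | ⟨rfl, rfl⟩
        · rw [if_neg hx.1, if_neg hz.1]
        · rw [if_neg hx.1, if_neg hz.1]; exact Sym2.eq_swap
      · refine (h.bip b hb z hz.2.2 h1).imp (fun h2 => hβ ▸ h2) fun h2 => ?_
        rcases Sym2.eq_iff.1 h2 with ⟨rfl, rfl⟩ | ⟨rfl, rfl⟩
        · rw [if_pos rfl, if_neg hz.1]
        · rw [if_pos rfl, if_neg hz.1]; exact Sym2.eq_swap
      · refine (h.bip x hx.2.2 b hb h1).imp (fun h2 => hβ ▸ h2) fun h2 => ?_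
        rcases Sym2.eq_iff.1 h2 with ⟨rfl, rfl⟩ | ⟨rfl, rfl⟩
        · rw [if_pos rfl, if_neg hx.1]
        · rw [if_pos rfl, if_neg hx.1]; exact Sym2.eq_swap
    · exact hK.of_identify (a := a) (b := b) (v := v) (fun x z => h.symm) ha hb hv hva hvb
        (fun x hx => ((hT x).1 hx).2.2) (by simp) (by simp) fun x _ z _ h1 => ident_ne h1
  have hbe : b ∈ S.erase v := Finset.mem_erase.2 ⟨(h.ne hvb).symm, hb⟩
  obtain ⟨s, y, hs⟩ := IH _ _ _ _ ((Finset.card_erase_lt_of_mem hbe).trans_le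
    (Finset.card_le_card (Finset.erase_subset _ _))) hG
  obtain ⟨s', y', hs', hy'⟩ := hs.of_ident h.antisymm hκ1 hab hτab
    (fun x hx => hκ x (Finset.mem_of_mem_erase hx) (Finset.ne_of_mem_erase hx))
    (Finset.mem_erase.2 ⟨(h.ne hva).symm, ha⟩)
  refine hs'.extend h.antisymm (y' a) c fun x hx hvx => ?_
  rcases hN x hx hvx with rfl | rfl | rfl
  · exact .inl rfl
  · exact .inl hy'
  · exact .inr rfl

/-- The position of a common neighbour `w` of `a` and `b` relative to them, when `a` is at the
bottom. -/
lemma Sol.path_order {s y : V → ℝ} (h : Sol S τ s y) {a b w : V} (ha : a ∈ S) (hb : b ∈ S)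
    (hw : w ∈ S) (hsa : s a = 1) (hya : ∀ x ∈ S, y a ≤ y x) (haw : τ a w ≠ 0) (hbw : τ b w ≠ 0) :
    0 < τ a w * s w ∧ y a < y w ∧ 0 < τ a w * τ b w * s b * (y w - y b) := by
  have h1 := h.2 a ha w hw haw
  have h2 := h.2 b hb w hw hbw
  have h3 := hya w hw
  rw [hsa, one_mul] at h1
  have h4 : 0 < τ a w * s w := pos_of_mul_pos_left h1 (sub_nonneg.2 h3)
  have hss : s w * s w = 1 := by rcases h.1 w with h | h <;> rw [h] <;> norm_num
  refine ⟨h4, sub_pos.1 (pos_of_mul_pos_right h1 h4.le), ?_⟩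
  have := mul_pos h4 h2
  have e : τ a w * s w * (τ b w * (s b * s w) * (y w - y b)) =
      (s w * s w) * (τ a w * τ b w * s b * (y w - y b)) := by ring
  rw [e, hss, one_mul] at this
  exact this

lemma chain_iff {y y' : V → ℝ} {a b c d : V} (h1 : y a < y b) (h2 : y b < y c) (h3 : y c < y d)
    (h1' : y' a < y' b) (h2' : y' b < y' c) (h3' : y' c < y' d) {x z : V}
    (hx : x = a ∨ x = b ∨ x = c ∨ x = d) (hz : z = a ∨ z = b ∨ z = c ∨ z = d) :
    y x < y z ↔ y' x < y' z := by
  rcases hx with rfl | rfl | rfl | rfl <;> rcases hz with rfl | rfl | rfl | rfl <;>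
    constructor <;> intro h <;> linarith

lemma cycle_iff {y y' : V → ℝ} {a b w₁ w₂ : V} {t₁ t₂ : ℝ} (ht : t₁ * t₂ < 0)
    (h1 : y a < y w₁) (h2 : y a < y w₂) (h3 : 0 < t₁ * (y w₁ - y b)) (h4 : 0 < t₂ * (y w₂ - y b))
    (h1' : y' a < y' w₁) (h2' : y' a < y' w₂) (h3' : 0 < t₁ * (y' w₁ - y' b))
    (h4' : 0 < t₂ * (y' w₂ - y' b)) {x z : V}
    (hx : x = a ∨ x = b ∨ x = w₁ ∨ x = w₂) (hz : z = a ∨ z = b ∨ z = w₁ ∨ z = w₂) :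
    y x < y z ↔ y' x < y' z := by
  have hpos : ∀ {t d : ℝ}, 0 < t → 0 < t * d → 0 < d := fun h h' => (mul_pos_iff_of_pos_left h).1 h'
  have hneg : ∀ {t d : ℝ}, t < 0 → 0 < t * d → d < 0 := fun h h' => by
    by_contra! hd
    linarith [mul_nonpos_of_nonpos_of_nonneg h.le hd]
  rcases mul_neg_iff.1 ht with ⟨k1, k2⟩ | ⟨k1, k2⟩
  · have i1 := hpos k1 h3
    have i2 := hpos k1 h3'
    have i3 := hneg k2 h4
    have i4 := hneg k2 h4'
    exact chain_iff (a := a) (b := w₂) (c := b) (d := w₁) h2 (by linarith) (by linarith)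
      h2' (by linarith) (by linarith) (by tauto) (by tauto)
  · have i1 := hneg k1 h3
    have i2 := hneg k1 h3'
    have i3 := hpos k2 h4
    have i4 := hpos k2 h4'
    exact chain_iff (a := a) (b := w₁) (c := b) (d := w₂) h1 (by linarith) (by linarith)
      h1' (by linarith) (by linarith) (by tauto) (by tauto)

lemma sign_eq {t s s' : ℝ} (hs : s = 1 ∨ s = -1) (hs' : s' = 1 ∨ s' = -1) (h : 0 < t * s)
    (h' : 0 < t * s') : s = s' := by
  rcases hs with rfl | rfl <;> rcases hs' with rfl | rfl <;> first | rfl | (exfalso; linarith)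

/-- Glueing along a negative `4`-cycle `a w₁ b w₂`. A solution on `S₁` is normalised so that `a`
is at the bottom, which fixes the cyclic order of the cycle up to the sign of `b`. The other side
is solved with an additional edge `ab` that forces the same sign of `b`; this edge creates no
`K₃,₃` minor since it comes from a path through `D`. -/
lemma Good.separate (h : Good β S τ p q) {S₁ S₂ D : Finset V} (h₁ : ∃ s y, Sol S₁ τ s y)
    (h₂ : ∀ τ' p' q', Good β S₂ τ' p' q' → ∃ s y, Sol S₂ τ' s y) {a b w₁ w₂ d d' : V}
    (hu : S₁ ∪ S₂ = S) (hi : S₁ ∩ S₂ = {a, b, w₁, w₂})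
    (hcut : ∀ x ∈ S, ∀ z ∈ S, τ x z ≠ 0 → (x ∈ S₁ ∧ z ∈ S₁) ∨ (x ∈ S₂ ∧ z ∈ S₂))
    (hD : Conn (fun x z => τ x z ≠ 0) (D : Set V)) (hDS : D ⊆ S) (hDS₂ : Disjoint D S₂)
    (hd : d ∈ D) (hd' : d' ∈ D) (hda : τ d a ≠ 0) (hdb : τ d' b ≠ 0)
    (hbip : ∀ x ∈ S₂, ∀ z ∈ S₂, τ x z ≠ 0 → β x ≠ β z) (hab : a ≠ b) (hτab : τ a b = 0)
    (hs : τ a w₁ * τ b w₁ * (τ a w₂ * τ b w₂) < 0) : ∃ s y, Sol S τ s y := by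
  have hτba : τ b a = 0 := by rw [h.antisymm a b, hτab, neg_zero]
  have hmem : ∀ x ∈ ({a, b, w₁, w₂} : Finset V), x ∈ S₁ ∧ x ∈ S₂ := fun x hx =>
    Finset.mem_inter.1 (hi ▸ hx)
  obtain ⟨ha1, ha2⟩ := hmem a (by simp)
  obtain ⟨hb1, hb2⟩ := hmem b (by simp)
  obtain ⟨hw11, hw12⟩ := hmem w₁ (by simp)
  obtain ⟨hw21, hw22⟩ := hmem w₂ (by simp)
  have hne := hs.ne
  simp only [ne_eq, mul_eq_zero, not_or] at hne
  obtain ⟨⟨haw₁, hbw₁⟩, haw₂, hbw₂⟩ := hne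
  have hS₂ : S₂ ⊆ S := hu ▸ Finset.subset_union_right
  obtain ⟨s₀, y₀, h₀⟩ := h₁
  obtain ⟨s₁, y₁, h₁, hsa₁, hya₁⟩ := h₀.normalize ha1
  let τ' : V → V → ℝ := fun x z =>
    τ x z + ((if x = a ∧ z = b then s₁ b else 0) - if z = a ∧ x = b then s₁ b else 0)
  have hτ' : ∀ x z, τ' x z ≠ 0 → τ x z ≠ 0 ∨ (x = a ∧ z = b) ∨ (x = b ∧ z = a) := by
    intro x z hxz
    by_contra! hcon
    refine hxz ?_
    simp only [τ']
    rw [hcon.1, if_neg fun e => hcon.2.1 e.1 e.2, if_neg fun e => hcon.2.2 e.2 e.1]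
    ring
  have hG : Good β S₂ τ' a b := by
    refine ⟨fun x z => ?_, fun x hx z hz hxz => ?_, fun hK => h.noMinor ?_⟩
    · simp only [τ']; rw [h.antisymm x z]; ring
    · exact (hτ' x z hxz).imp (hbip x hx z hz) Sym2.eq_iff.2
    · exact hK.of_contract (a := a) (b := b) (fun x z => h.symm) hD (Finset.coe_subset.2 hDS)
        (Finset.disjoint_coe.2 hDS₂) (Finset.coe_subset.2 hS₂) (hS₂ ha2) hd hd' hda hdb
        fun x _ z _ h1 => hτ' x z h1
  obtain ⟨s₀', y₀', h₀'⟩ := h₂ τ' a b hG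
  obtain ⟨s₂, y₂, h₂', hsa₂, hya₂⟩ := h₀'.normalize ha2
  have h₂ : Sol S₂ τ s₂ y₂ := h₂'.mono subset_rfl fun x _ z _ hxz => by
    simp only [τ']
    rw [if_neg, if_neg]
    · ring
    · rintro ⟨rfl, rfl⟩; exact hxz hτba
    · rintro ⟨rfl, rfl⟩; exact hxz hτab
  have hsb : s₁ b = s₂ b := by
    have e : τ' a b = s₁ b := by simp [τ', hτab, hab]
    have h1 := h₂'.2 a ha2 b hb2 (by
      rw [e]; rcases h₁.1 b with h | h <;> rw [h] <;> norm_num)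
    rw [e, hsa₂, one_mul] at h1
    have h2 : 0 < s₁ b * s₂ b := pos_of_mul_pos_left h1 (sub_nonneg.2 (hya₂ b hb2))
    rcases h₁.1 b with h3 | h3 <;> rcases h₂.1 b with h4 | h4 <;> rw [h3, h4] at h2 ⊢ <;>
      norm_num at h2
  obtain ⟨p1, p2, p3⟩ := h₁.path_order ha1 hb1 hw11 hsa₁ hya₁ haw₁ hbw₁
  obtain ⟨q1, q2, q3⟩ := h₁.path_order ha1 hb1 hw21 hsa₁ hya₁ haw₂ hbw₂
  obtain ⟨p1', p2', p3'⟩ := h₂.path_order ha2 hb2 hw12 hsa₂ hya₂ haw₁ hbw₁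
  obtain ⟨q1', q2', q3'⟩ := h₂.path_order ha2 hb2 hw22 hsa₂ hya₂ haw₂ hbw₂
  rw [← hsb] at p3' q3'
  have memC : ∀ x, x ∈ ({a, b, w₁, w₂} : Finset V) ↔ x = a ∨ x = b ∨ x = w₁ ∨ x = w₂ :=
    fun x => by simp
  have hss : s₁ b * s₁ b = 1 := by rcases h₁.1 b with h | h <;> rw [h] <;> norm_num
  have hst : τ a w₁ * τ b w₁ * s₁ b * (τ a w₂ * τ b w₂ * s₁ b) < 0 := by
    have e : τ a w₁ * τ b w₁ * s₁ b * (τ a w₂ * τ b w₂ * s₁ b) =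
      (s₁ b * s₁ b) * (τ a w₁ * τ b w₁ * (τ a w₂ * τ b w₂)) := by ring
    rw [e, hss, one_mul]; exact hs
  have hgl := Sol.glue h.antisymm (by rw [hu]; exact hcut) h₁ h₂ (by
    rw [hi]
    intro x hx
    rcases (memC x).1 hx with rfl | rfl | rfl | rfl
    · rw [hsa₁, hsa₂]
    · exact hsb
    · exact sign_eq (h₁.1 _) (h₂.1 _) p1 p1'
    · exact sign_eq (h₁.1 _) (h₂.1 _) q1 q1') (by
    rw [hi]
    intro x hx z hz
    rw [memC] at hx hz
    exact cycle_iff hst p2 q2 p3 q3 p2' q2' p3' q3' hx hz)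
  rwa [hu] at hgl

/-- Glueing along an edge. -/
lemma Sol.glue_edge (hτ : ∀ x z, τ z x = -τ x z) {S₁ S₂ : Finset V}
    (h₁ : ∃ s y, Sol S₁ τ s y) (h₂ : ∃ s y, Sol S₂ τ s y) {x w : V} (hxw : τ x w ≠ 0)
    (hu : S₁ ∪ S₂ = S) (hi : S₁ ∩ S₂ = {x, w})
    (hcut : ∀ x ∈ S, ∀ z ∈ S, τ x z ≠ 0 → (x ∈ S₁ ∧ z ∈ S₁) ∨ (x ∈ S₂ ∧ z ∈ S₂)) :
    ∃ s y, Sol S τ s y := by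
  have hmem : ∀ t ∈ ({x, w} : Finset V), t ∈ S₁ ∧ t ∈ S₂ := fun t ht =>
    Finset.mem_inter.1 (hi ▸ ht)
  obtain ⟨hx1, hx2⟩ := hmem x (by simp)
  obtain ⟨hw1, hw2⟩ := hmem w (by simp)
  obtain ⟨s₀, y₀, h₀⟩ := h₁
  obtain ⟨s₁, y₁, h₁, hs₁, hy₁⟩ := h₀.normalize hx1
  obtain ⟨s₀', y₀', h₀'⟩ := h₂
  obtain ⟨s₂, y₂, h₂, hs₂, hy₂⟩ := h₀'.normalize hx2
  have key : ∀ {T : Finset V} {s y : V → ℝ}, Sol T τ s y → x ∈ T → w ∈ T → s x = 1 →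
      (∀ t ∈ T, y x ≤ y t) → 0 < τ x w * s w ∧ y x < y w := by
    intro T s y h hx hw hs hy
    have h1 := h.2 x hx w hw hxw
    rw [hs, one_mul] at h1
    have h4 : 0 < τ x w * s w := pos_of_mul_pos_left h1 (sub_nonneg.2 (hy w hw))
    exact ⟨h4, sub_pos.1 (pos_of_mul_pos_right h1 h4.le)⟩
  obtain ⟨p1, p2⟩ := key h₁ hx1 hw1 hs₁ hy₁
  obtain ⟨q1, q2⟩ := key h₂ hx2 hw2 hs₂ hy₂
  have hgl := Sol.glue hτ (by rw [hu]; exact hcut) h₁ h₂ (by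
    rw [hi]
    intro t ht
    rcases Finset.mem_insert.1 ht with rfl | ht
    · rw [hs₁, hs₂]
    · rw [Finset.mem_singleton.1 ht]; exact sign_eq (h₁.1 _) (h₂.1 _) p1 q1) (by
    rw [hi]
    intro t ht t' ht'
    simp only [Finset.mem_insert, Finset.mem_singleton] at ht ht'
    rcases ht with rfl | rfl <;> rcases ht' with rfl | rfl <;>
      constructor <;> intro h <;> linarith)
  rwa [hu] at hgl

end

/-! ### Separating negative four-cycles -/

section

variable {β : V → Bool} {S : Finset V} {τ : V → V → ℝ} {p q : V}

/-- `Good.separate` for the component `D` of `t` in the complement of the cycle. -/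
lemma Good.separate_comp (h : Good β S τ p q)
    (IH : ∀ T τ' p' q', T.card < S.card → Good β T τ' p' q' → ∃ s y, Sol T τ' s y)
    {C D : Finset V} {a b w₁ w₂ t u d d' : V} (hC : C = {a, b, w₁, w₂}) (hCS : C ⊆ S)
    (ht : t ∈ S \ C) (hD : D = comp (fun x z => τ x z ≠ 0) (S \ C) t) (hu : u ∈ S \ C)
    (huD : u ∉ D) (hbip : ∀ x ∈ S \ D, ∀ z ∈ S \ D, τ x z ≠ 0 → β x ≠ β z)
    (hd : d ∈ D) (hd' : d' ∈ D) (hda : τ d a ≠ 0) (hdb : τ d' b ≠ 0) (hab : a ≠ b)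
    (hτab : τ a b = 0) (hs : τ a w₁ * τ b w₁ * (τ a w₂ * τ b w₂) < 0) :
    ∃ s y, Sol S τ s y := by
  obtain ⟨hun, hi, hcut⟩ := comp_cut (fun x z => h.symm) hCS hD
  have htD : t ∈ D := hD ▸ self_mem_comp ht
  have hDR : D ⊆ S \ C := hD ▸ comp_subset _ _
  have hDS : D ⊆ S := hDR.trans Finset.sdiff_subset
  have hs1 : C ∪ D ⊆ S := Finset.union_subset hCS hDS
  have hy1 : (C ∪ D).card < S.card := Finset.card_lt_card ⟨hs1, fun h => by
    rcases Finset.mem_union.1 (h (Finset.mem_sdiff.1 hu).1) with h | h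
    · exact (Finset.mem_sdiff.1 hu).2 h
    · exact huD h⟩
  have hy2 : (S \ D).card < S.card := Finset.card_lt_card
    ⟨Finset.sdiff_subset, fun h => (Finset.mem_sdiff.1 (h (hDS htD))).2 htD⟩
  exact h.separate (IH _ _ _ _ hy1 (h.mono hs1)) (fun τ' p' q' => IH _ τ' p' q' hy2) hun
    (hi.trans hC) hcut (hD ▸ comp_conn (fun x z => h.symm) ht) hDS Finset.disjoint_sdiff hd hd'
    hda hdb hbip hab hτab hs

/-- All edges among the vertices of a chordless `4`-cycle join different classes. -/
lemma Good.bip_of_cycle (h : Good β S τ p q) {a b w₁ w₂ : V} (ha : a ∈ S) (hb : b ∈ S)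
    (hw₁ : w₁ ∈ S) (haw₁ : τ a w₁ ≠ 0) (hbw₁ : τ b w₁ ≠ 0) (hab : a ≠ b) (hτab : τ a b = 0)
    (hτw : τ w₁ w₂ = 0) (hβab : β a = β b) (hβw : β w₁ = β w₂) {x z : V}
    (hx : x = a ∨ x = b ∨ x = w₁ ∨ x = w₂) (hz : z = a ∨ z = b ∨ z = w₁ ∨ z = w₂)
    (hxz : τ x z ≠ 0) : β x ≠ β z := by
  have hβ : β a ≠ β w₁ := by
    intro hβ
    have h1 := (h.bip a ha w₁ hw₁ haw₁).resolve_left fun h => h hβ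
    have h2 := (h.bip b hb w₁ hw₁ hbw₁).resolve_left fun h => h (hβab ▸ hβ)
    rcases Sym2.eq_iff.1 (h1.trans h2.symm) with ⟨h3, -⟩ | ⟨h3, h4⟩
    · exact hab h3
    · exact hab (h3.trans h4)
  have e1 : ∀ {x : V}, (x = a ∨ x = b) → β x = β a := by
    rintro x (rfl | rfl)
    · rfl
    · exact hβab.symm
  have e2 : ∀ {x : V}, (x = w₁ ∨ x = w₂) → β x = β w₁ := by
    rintro x (rfl | rfl)
    · rfl
    · exact hβw.symm
  rw [← or_assoc] at hx hz
  have hzx := h.symm hxz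
  rcases hx with hx | hx <;> rcases hz with hz | hz
  · exfalso
    rcases hx with rfl | rfl <;> rcases hz with rfl | rfl
    · exact hxz (h.self _)
    · exact hxz hτab
    · exact hzx hτab
    · exact hxz (h.self _)
  · rw [e1 hx, e2 hz]; exact hβ
  · rw [e2 hx, e1 hz]; exact hβ.symm
  · exfalso
    rcases hx with rfl | rfl <;> rcases hz with rfl | rfl
    · exact hxz (h.self _)
    · exact hxz hτw
    · exact hzx hτw
    · exact hxz (h.self _)

lemma mem_comp_of_reach {r : V → V → Prop} {R D : Finset V} {v z : V} (hv : v ∈ R) (hD : D ⊆ R)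
    (h : Relation.ReflTransGen (fun x z => r x z ∧ x ∈ (D : Set V) ∧ z ∈ (D : Set V)) v z) :
    z ∈ comp r R v := by
  induction h with
  | refl => exact self_mem_comp hv
  | tail _ h5 ih => exact mem_comp_of_adj ih (hD (Finset.mem_coe.1 h5.2.2)) h5.1

/-- If a component `D` of the complement of `C` is attached at most to the ends of an edge `xw`
in `C`, it can be solved separately. -/
lemma Good.glue_comp (h : Good β S τ p q)
    (IH : ∀ T τ' p' q', T.card < S.card → Good β T τ' p' q' → ∃ s y, Sol T τ' s y)
    {C D : Finset V} {v z x w : V} (hCS : C ⊆ S) (hzR : z ∈ S \ C)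
    (hD : D = comp (fun x z => τ x z ≠ 0) (S \ C) z) (hv : v ∈ S) (hvC : v ∉ C) (hvD : v ∉ D)
    (hxC : x ∈ C) (hwC : w ∈ C) (hxw : τ x w ≠ 0)
    (hatt : ∀ d ∈ D, ∀ t ∈ C, τ d t ≠ 0 → t = x ∨ t = w) : ∃ s y, Sol S τ s y := by
  have hr : ∀ x z, τ x z ≠ 0 → τ z x ≠ 0 := fun x z => h.symm
  have hzD : z ∈ D := hD ▸ self_mem_comp hzR
  have hDR : D ⊆ S \ C := hD ▸ comp_subset _ _
  have hDS : D ⊆ S := hDR.trans Finset.sdiff_subset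
  have hDC : ∀ x ∈ D, x ∉ C := fun x hx => (Finset.mem_sdiff.1 (hDR hx)).2
  obtain ⟨hun, hi, hcut⟩ := comp_cut hr hCS hD
  have hxS := hCS hxC
  have hwS := hCS hwC
  have hsub : D ∪ {x, w} ⊆ S := Finset.union_subset hDS (by
    intro t ht
    rcases Finset.mem_insert.1 ht with rfl | ht
    · exact hxS
    · rw [Finset.mem_singleton.1 ht]; exact hwS)
  have hc1 : (D ∪ {x, w}).card < S.card := Finset.card_lt_card ⟨hsub, fun h1 => by
    have := h1 hv
    simp only [Finset.mem_union, Finset.mem_insert, Finset.mem_singleton] at this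
    rcases this with h2 | rfl | rfl
    · exact hvD h2
    · exact hvC hxC
    · exact hvC hwC⟩
  have hc2 : (S \ D).card < S.card := Finset.card_lt_card
    ⟨Finset.sdiff_subset, fun h => (Finset.mem_sdiff.1 (h (hDS hzD))).2 hzD⟩
  refine Sol.glue_edge h.antisymm (IH _ _ _ _ hc1 (h.mono hsub))
    (IH _ _ _ _ hc2 (h.mono Finset.sdiff_subset)) hxw ?_ ?_ ?_
  · refine Finset.Subset.antisymm (Finset.union_subset hsub Finset.sdiff_subset) fun t ht => ?_
    by_cases htD : t ∈ D
    · simp [htD]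
    · simp [htD, ht]
  · ext t
    simp only [Finset.mem_inter, Finset.mem_union, Finset.mem_insert, Finset.mem_singleton,
      Finset.mem_sdiff]
    constructor
    · tauto
    · rintro (rfl | rfl)
      · exact ⟨.inr (.inl rfl), hxS, fun h => hDC _ h hxC⟩
      · exact ⟨.inr (.inr rfl), hwS, fun h => hDC _ h hwC⟩
  · intro t ht t' ht' htt'
    rcases hcut t ht t' ht' htt' with ⟨h1, h2⟩ | h1
    · rw [Finset.mem_union] at h1 h2
      have hmem : ∀ t, t = x ∨ t = w → t ∈ D ∪ {x, w} := fun t ht => by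
        rcases ht with rfl | rfl <;> simp
      by_cases k1 : t ∈ D
      · refine .inl ⟨Finset.mem_union_left _ k1, ?_⟩
        rcases h2 with h2 | h2
        · exact hmem _ (hatt t k1 t' h2 htt')
        · exact Finset.mem_union_left _ h2
      · by_cases k2 : t' ∈ D
        · exact .inl ⟨hmem _ (hatt t' k2 t (h1.resolve_right k1) (hr _ _ htt')),
            Finset.mem_union_left _ k2⟩
        · exact .inr ⟨Finset.mem_sdiff.2 ⟨ht, k1⟩, Finset.mem_sdiff.2 ⟨ht', k2⟩⟩
    · exact .inr h1

lemma exists_attach {D : Finset V} {a b : V}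
    (hD : ¬ ((∃ d ∈ D, τ d a ≠ 0) ∧ ∃ d ∈ D, τ d b ≠ 0)) :
    ∃ x, (x = a ∨ x = b) ∧ ∀ d ∈ D, ∀ t, (t = a ∨ t = b) → τ d t ≠ 0 → t = x := by
  by_cases h1 : ∃ d ∈ D, τ d a ≠ 0
  · refine ⟨a, .inl rfl, ?_⟩
    rintro d hd t (rfl | rfl) hdt
    · rfl
    · exact absurd ⟨h1, d, hd, hdt⟩ hD
  · refine ⟨b, .inr rfl, ?_⟩
    rintro d hd t (rfl | rfl) hdt
    · exact absurd ⟨d, hd, hdt⟩ h1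
    · rfl

/-- The case of a separating negative `4`-cycle `a w₁ b w₂` such that the component of `v` in its
complement is attached to both `a` and `b`. If the exceptional edge lies beyond the cycle, the
glueing is done on the component containing an end of it instead; this component is attached to
two opposite vertices of the cycle, or else to at most the two ends of an edge. -/
lemma Good.of_not_conn (h : Good β S τ p q)
    (IH : ∀ T τ' p' q', T.card < S.card → Good β T τ' p' q' → ∃ s y, Sol T τ' s y)
    {C : Finset V} {v a b w₁ w₂ : V} (hC : C = {a, b, w₁, w₂}) (hCS : C ⊆ S) (hv : v ∈ S \ C)
    (hva : τ v a ≠ 0) (hvb : τ v b ≠ 0) (hab : a ≠ b) (hw : w₁ ≠ w₂) (hτab : τ a b = 0)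
    (hτw : τ w₁ w₂ = 0) (hβab : β a = β b) (hβw : β w₁ = β w₂)
    (hs : τ a w₁ * τ b w₁ * (τ a w₂ * τ b w₂) < 0)
    (hR : ¬ Conn (fun x z => τ x z ≠ 0) ((S \ C : Finset V) : Set V)) : ∃ s y, Sol S τ s y := by
  have hr : ∀ x z, τ x z ≠ 0 → τ z x ≠ 0 := fun x z => h.symm
  have memC : ∀ x, x ∈ C ↔ x = a ∨ x = b ∨ x = w₁ ∨ x = w₂ := fun x => by simp [hC]
  have hne := hs.ne
  simp only [ne_eq, mul_eq_zero, not_or] at hne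
  obtain ⟨⟨haw₁, hbw₁⟩, haw₂, hbw₂⟩ := hne
  by_cases hbip : ∀ x ∈ S \ comp (fun x z => τ x z ≠ 0) (S \ C) v,
      ∀ z ∈ S \ comp (fun x z => τ x z ≠ 0) (S \ C) v, τ x z ≠ 0 → β x ≠ β z
  · obtain ⟨u, hu, huD⟩ := exists_not_mem_comp hr hv hR
    exact h.separate_comp IH hC hCS hv rfl hu huD hbip (self_mem_comp hv) (self_mem_comp hv)
      hva hvb hab hτab hs
  -- some edge avoiding the component of `v` joins equal classes, so it is the exceptional edge
  push Not at hbip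
  obtain ⟨z, hzR, hzv, hzpq⟩ : ∃ z ∈ S \ C, z ∉ comp (fun x z => τ x z ≠ 0) (S \ C) v ∧
      (z = p ∨ z = q) := by
    obtain ⟨x₀, hx, z₀, hz, hxz, hβ⟩ := hbip
    rw [Finset.mem_sdiff] at hx hz
    have hpq := (h.bip x₀ hx.1 z₀ hz.1 hxz).resolve_left fun h => h hβ
    by_cases hxC : x₀ ∈ C
    · by_cases hzC : z₀ ∈ C
      · exact absurd hβ (h.bip_of_cycle (hCS ((memC a).2 (by simp))) (hCS ((memC b).2 (by simp)))
          (hCS ((memC w₁).2 (by simp))) haw₁ hbw₁ hab hτab hτw hβab hβw ((memC x₀).1 hxC)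
          ((memC z₀).1 hzC) hxz)
      · refine ⟨z₀, Finset.mem_sdiff.2 ⟨hz.1, hzC⟩, hz.2, ?_⟩
        rcases Sym2.eq_iff.1 hpq with h | h <;> simp [h]
    · refine ⟨x₀, Finset.mem_sdiff.2 ⟨hx.1, hxC⟩, hx.2, ?_⟩
      rcases Sym2.eq_iff.1 hpq with h | h <;> simp [h]
  obtain ⟨D, hD⟩ : ∃ D, D = comp (fun x z => τ x z ≠ 0) (S \ C) z := ⟨_, rfl⟩
  have hzD : z ∈ D := hD ▸ self_mem_comp hzR
  have hDR : D ⊆ S \ C := hD ▸ comp_subset _ _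
  have hDS : D ⊆ S := hDR.trans Finset.sdiff_subset
  have hDC : ∀ x ∈ D, x ∉ C := fun x hx => (Finset.mem_sdiff.1 (hDR hx)).2
  -- every edge beyond `D` joins different classes, as the end `z` of the exceptional one is in `D`
  have hbip' : ∀ x ∈ S \ D, ∀ z ∈ S \ D, τ x z ≠ 0 → β x ≠ β z := by
    intro x hx z' hz' hxz
    rw [Finset.mem_sdiff] at hx hz'
    refine (h.bip x hx.1 z' hz'.1 hxz).resolve_right fun h1 => ?_
    have h2 : z ∈ s(x, z') := by rw [h1]; exact Sym2.mem_iff.2 hzpq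
    rcases Sym2.mem_iff.1 h2 with rfl | rfl
    · exact hx.2 hzD
    · exact hz'.2 hzD
  have hvD : v ∉ D := fun hvD => by
    refine hzv ?_
    have h3 := (hD ▸ comp_conn hr hzR : Conn _ (D : Set V)).2 v hvD z hzD
    exact mem_comp_of_reach hv hDR h3
  by_cases hDab : (∃ d ∈ D, τ d a ≠ 0) ∧ ∃ d ∈ D, τ d b ≠ 0
  · obtain ⟨⟨d, hd, hda⟩, d', hd', hdb⟩ := hDab
    exact h.separate_comp IH hC hCS hzR hD hv hvD hbip' hd hd' hda hdb hab hτab hs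
  by_cases hDw : (∃ d ∈ D, τ d w₁ ≠ 0) ∧ ∃ d ∈ D, τ d w₂ ≠ 0
  · obtain ⟨⟨d, hd, hda⟩, d', hd', hdb⟩ := hDw
    refine h.separate_comp IH (hC.trans ?_) hCS hzR hD hv hvD hbip' hd hd' hda hdb hw hτw
      (w₁ := a) (w₂ := b) ?_
    · ext x; simp; tauto
    · rw [h.antisymm a w₁, h.antisymm a w₂, h.antisymm b w₁, h.antisymm b w₂]
      linarith
  obtain ⟨x, w, hxw, hxC, hwC, hatt⟩ : ∃ x w, τ x w ≠ 0 ∧ x ∈ C ∧ w ∈ C ∧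
      ∀ d ∈ D, ∀ t ∈ C, τ d t ≠ 0 → t = x ∨ t = w := by
    have hx := exists_attach hDab
    have hw := exists_attach hDw
    obtain ⟨x, hx, hx'⟩ := hx
    obtain ⟨w, hw, hw'⟩ := hw
    refine ⟨x, w, ?_, (memC x).2 (hx.imp_right .inl), (memC w).2 (.inr (.inr hw)),
      fun d hd t ht hdt => ?_⟩
    · rcases hx with rfl | rfl <;> rcases hw with rfl | rfl <;> assumption
    · rcases (memC t).1 ht with h1 | h1 | h1 | h1
      · exact .inl (hx' d hd t (.inl h1) hdt)
      · exact .inl (hx' d hd t (.inr h1) hdt)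
      · exact .inr (hw' d hd t (.inl h1) hdt)
      · exact .inr (hw' d hd t (.inr h1) hdt)
  exact h.glue_comp IH hCS hzR hD (Finset.mem_sdiff.1 hv).1 (Finset.mem_sdiff.1 hv).2 hvD hxC hwC
    hxw hatt

end

/-! ### Existence of solutions -/

section

variable {β : V → Bool} {S : Finset V} {τ : V → V → ℝ} {p q : V}

/-- The main reduction at a vertex `v` of degree three with neighbours `a, b, c`: either `a` and
`b` can be identified, or they lie on a negative `4`-cycle avoiding `v`. The cycle has no chord and
then separates `v` from the rest, unless its other two vertices are the ends of the exceptional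
edge. -/
lemma Good.step (h : Good β S τ p q)
    (IH : ∀ T τ' p' q', T.card < S.card → Good β T τ' p' q' → ∃ s y, Sol T τ' s y)
    (hdeg : ∀ x ∈ S, 3 ≤ (nb (fun x z => τ x z ≠ 0) S x).card) {v a b c : V} (hv : v ∈ S)
    (hvpq : v ∉ s(p, q)) (hN : ∀ x ∈ S, τ v x ≠ 0 → x = a ∨ x = b ∨ x = c)
    (ha : a ∈ S) (hb : b ∈ S) (hc : c ∈ S) (hva : τ v a ≠ 0) (hvb : τ v b ≠ 0) (hvc : τ v c ≠ 0)
    (hab : a ≠ b) (hac : a ≠ c) (hbc : b ≠ c) (he : s(a, b) ≠ s(p, q)) :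
    (∃ s y, Sol S τ s y) ∨ ∃ w₁ w₂, w₁ ∈ S ∧ w₂ ∈ S ∧ v ≠ w₁ ∧ v ≠ w₂ ∧ w₁ ≠ w₂ ∧
      τ a w₁ ≠ 0 ∧ τ b w₁ ≠ 0 ∧ τ a w₂ ≠ 0 ∧ τ b w₂ ≠ 0 ∧ s(w₁, w₂) = s(p, q) := by
  have bflip : ∀ {p q s : Bool}, p ≠ q → p ≠ s → q = s := by decide
  have hβv : ∀ x ∈ S, τ v x ≠ 0 → β v ≠ β x := fun x hx hvx =>
    (h.bip v hv x hx hvx).resolve_right fun e => hvpq (e ▸ Sym2.mem_mk_left v x)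
  have hβa := hβv a ha hva
  have hβab : β a = β b := bflip hβa (hβv b hb hvb)
  have hτab : τ a b = 0 := by
    by_contra h1
    exact (h.bip a ha b hb h1).elim (fun h2 => h2 hβab) he
  by_cases h₁ : ∀ x ∈ S, x ≠ v → 0 ≤ 1 * (τ a x * τ b x)
  · exact .inl (h.identify IH hv hN ha hb hva hvb hab hβab hτab (.inl rfl) h₁)
  by_cases h₂ : ∀ x ∈ S, x ≠ v → 0 ≤ -1 * (τ a x * τ b x)
  · exact .inl (h.identify IH hv hN ha hb hva hvb hab hβab hτab (.inr rfl) h₂)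
  push Not at h₁ h₂
  obtain ⟨w₂, hw₂, hw₂v, hs₂⟩ := h₁
  obtain ⟨w₁, hw₁, hw₁v, hs₁⟩ := h₂
  have hs₁' : 0 < τ a w₁ * τ b w₁ := by linarith
  have hs₂' : τ a w₂ * τ b w₂ < 0 := by linarith
  have haw₁ := left_ne_zero_of_mul hs₁'.ne'
  have hbw₁ := right_ne_zero_of_mul hs₁'.ne'
  have haw₂ := left_ne_zero_of_mul hs₂'.ne
  have hbw₂ := right_ne_zero_of_mul hs₂'.ne
  have hw : w₁ ≠ w₂ := by rintro rfl; linarith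
  have hβw : ∀ w ∈ S, τ a w ≠ 0 → τ b w ≠ 0 → β v = β w := by
    intro w hw h1 h2
    refine bflip hβa.symm fun h3 => ?_
    have h4 := (h.bip a ha w hw h1).resolve_left fun h => h h3
    have h5 := (h.bip b hb w hw h2).resolve_left fun h => h (hβab ▸ h3)
    rcases Sym2.eq_iff.1 (h4.trans h5.symm) with ⟨h6, -⟩ | ⟨h6, h7⟩
    · exact hab h6
    · exact hab (h6.trans h7)
  have hβw₁ := hβw w₁ hw₁ haw₁ hbw₁
  have hβw₂ := hβw w₂ hw₂ haw₂ hbw₂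
  by_cases hwpq : s(w₁, w₂) = s(p, q)
  · exact .inr ⟨w₁, w₂, hw₁, hw₂, hw₁v.symm, hw₂v.symm, hw, haw₁, hbw₁, haw₂, hbw₂, hwpq⟩
  left
  have hτw : τ w₁ w₂ = 0 := by
    by_contra h1
    exact (h.bip w₁ hw₁ w₂ hw₂ h1).elim (fun h2 => h2 (hβw₁.symm.trans hβw₂)) hwpq
  have hτw' : τ w₂ w₁ = 0 := by rw [h.antisymm w₁ w₂, hτw, neg_zero]
  have hr : ∀ x z, τ x z ≠ 0 → τ z x ≠ 0 := fun x z => h.symm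
  have hvw₁ : τ v w₁ = 0 := by
    by_contra h1; exact hβv w₁ hw₁ h1 hβw₁
  have hvw₂ : τ v w₂ = 0 := by
    by_contra h1; exact hβv w₂ hw₂ h1 hβw₂
  have h1c : w₁ ≠ c := by rintro rfl; exact hvc hvw₁
  have h2c : w₂ ≠ c := by rintro rfl; exact hvc hvw₂
  have hx : ∀ w ∈ S, τ w w₁ = 0 → τ w w₂ = 0 → τ v w = 0 →
      ∃ x ∈ (S : Set V) \ {a, b, w₁, w₂}, x ≠ v ∧ τ x w ≠ 0 := by
    intro w hwS hww₁ hww₂ hvw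
    obtain ⟨x, hx, hx'⟩ : ∃ x ∈ nb (fun x z => τ x z ≠ 0) S w, x ∉ ({a, b} : Finset V) := by
      by_contra! h
      have := Finset.card_le_card
        (show nb (fun x z => τ x z ≠ 0) S w ⊆ {a, b} from h)
      rw [Finset.card_pair hab] at this
      have := hdeg w hwS
      omega
    simp only [Finset.mem_insert, Finset.mem_singleton, not_or, mem_nb] at hx hx'
    refine ⟨x, ⟨hx.1, ?_⟩, ?_, hr _ _ hx.2⟩
    · rintro (h | h | h | h)
      · exact hx'.1 h
      · exact hx'.2 h
      · exact hx.2 (h ▸ hww₁)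
      · rw [Set.mem_singleton_iff] at h
        exact hx.2 (h ▸ hww₂)
    · intro h; exact hr _ _ hx.2 (h ▸ hvw)
  obtain ⟨x₁, hx₁, hx₁v, hx₁w⟩ := hx w₁ hw₁ (h.self _) hτw hvw₁
  obtain ⟨x₂, hx₂, hx₂v, hx₂w⟩ := hx w₂ hw₂ hτw' (h.self _) hvw₂
  obtain ⟨C, hC⟩ : ∃ C : Finset V, C = {a, b, w₁, w₂} := ⟨_, rfl⟩
  have memC : ∀ x, x ∈ C ↔ x = a ∨ x = b ∨ x = w₁ ∨ x = w₂ := fun x => by simp [hC]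
  have hCS : C ⊆ S := fun x hx => by
    rcases (memC x).1 hx with rfl | rfl | rfl | rfl <;> assumption
  have hvC : v ∉ C := by
    rw [memC]
    rintro (h1 | h1 | h1 | h1)
    · exact h.ne hva h1
    · exact h.ne hvb h1
    · exact hw₁v h1.symm
    · exact hw₂v h1.symm
  refine h.of_not_conn IH hC hCS (Finset.mem_sdiff.2 ⟨hv, hvC⟩) hva hvb hab hw hτab hτw hβab
    (hβw₁.symm.trans hβw₂) (mul_neg_of_pos_of_neg hs₁' hs₂') fun hconn => h.noMinor ?_
  refine HasK33.of_conn_compl hr (c := c) hv ha hb hc hw₁ hw₂ hN hva hvb hvc haw₁ hbw₁ haw₂ hbw₂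
    ?_ hx₁ hx₂ hx₁v hx₂v hx₁w hx₂w ?_
  · simp [h.ne hva, h.ne hvb, h.ne hvc, hab, hac, hbc, h.ne haw₁, h.ne haw₂, h.ne hbw₁,
      h.ne hbw₂, h1c.symm, h2c.symm, hw₁v.symm, hw₂v.symm, hw]
  · rw [Finset.coe_sdiff, hC] at hconn
    simpa using hconn

/-- By the edge bound, a graph with minimum degree three has a vertex of degree three that is not
an end of the exceptional edge. -/
lemma Good.exists_degree_three (h : Good β S τ p q) (hS : 3 ≤ S.card)
    (hdeg : ∀ x ∈ S, 3 ≤ (nb (fun x z => τ x z ≠ 0) S x).card) :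
    ∃ v ∈ S, v ∉ s(p, q) ∧ (nb (fun x z => τ x z ≠ 0) S v).card = 3 := by
  by_contra! hcon
  let r₀ : V → V → Prop := fun x z => τ x z ≠ 0 ∧ β x ≠ β z
  have hb := edge_bound β (S.card + darts r₀ S) r₀ S (fun x z hxz => ⟨h.symm hxz.1, hxz.2.symm⟩)
    (fun x _ z _ hxz => hxz.2) (fun hK => h.noMinor (hK.mono subset_rfl fun _ _ _ _ h => h.1)) hS
    le_rfl
  have hcard : ∀ t u x : V, s(t, u) = s(p, q) → x = t → x ∈ S →
      (nb (fun x z => τ x z ≠ 0) S x).card ≤ (nb r₀ S x).card + 1 := by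
    intro t u x htu hxt hx
    refine le_trans (Finset.card_le_card fun z hz => ?_) (Finset.card_insert_le u _)
    rw [mem_nb] at hz
    rw [Finset.mem_insert, mem_nb]
    refine (h.bip x hx z hz.1 hz.2).elim (fun h1 => .inr ⟨hz.1, hz.2, h1⟩) fun h1 => .inl ?_
    rw [hxt, ← htu] at h1
    rcases Sym2.eq_iff.1 h1 with ⟨-, h2⟩ | ⟨h2, h3⟩
    · exact h2
    · exact h3.trans h2
  have key : ∀ x ∈ S, 4 ≤ (nb r₀ S x).card + ((if x = p then 2 else 0) + if x = q then 2 else 0) := by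
    intro x hx
    have h3 := hdeg x hx
    by_cases hxp : x = p
    · have := hcard p q x rfl hxp hx
      rw [if_pos hxp]; omega
    · by_cases hxq : x = q
      · have := hcard q p x Sym2.eq_swap hxq hx
        rw [if_pos hxq]; omega
      · have hx' : x ∉ s(p, q) := by simp [hxp, hxq]
        have h4 := hcon x hx hx'
        have h5 : nb (fun x z => τ x z ≠ 0) S x ⊆ nb r₀ S x := fun z hz => by
          rw [mem_nb] at hz ⊢
          exact ⟨hz.1, hz.2, (h.bip x hx z hz.1 hz.2).resolve_right fun e =>
            hx' (e ▸ Sym2.mem_mk_left x z)⟩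
        have := Finset.card_le_card h5
        omega
  have hsum := Finset.sum_le_sum key
  rw [Finset.sum_const, smul_eq_mul, Finset.sum_add_distrib, Finset.sum_add_distrib,
    ← darts_eq_sum] at hsum
  have h2 : ∀ t : V, (∑ x ∈ S, if x = t then 2 else 0) ≤ 2 := fun t => by
    rw [Finset.sum_ite_eq']; split_ifs <;> omega
  have := h2 p
  have := h2 q
  omega

end

/-- Every `τ` in the situation of `Good` has a solution. -/
theorem Good.exists_sol {β : V → Bool} (n : ℕ) : ∀ (S : Finset V) (τ : V → V → ℝ) (p q : V),
    S.card < n → Good β S τ p q → ∃ s y, Sol S τ s y := by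
  induction n with
  | zero => intro S _ _ _ h; omega
  | succ n ihn =>
  intro S τ p q hn h
  have IH : ∀ T τ' p' q', T.card < S.card → Good β T τ' p' q' → ∃ s y, Sol T τ' s y :=
    fun T τ' p' q' hT => ihn T τ' p' q' (by omega)
  by_cases hdeg : ∀ x ∈ S, 3 ≤ (nb (fun x z => τ x z ≠ 0) S x).card
  swap
  · push Not at hdeg
    obtain ⟨v, hv, h2⟩ := hdeg
    obtain ⟨s, y, hs⟩ := IH _ _ _ _ (Finset.card_erase_lt_of_mem hv)
      (h.mono (Finset.erase_subset v S))
    obtain ⟨t₁, t₂, ht⟩ : ∃ t₁ t₂, nb (fun x z => τ x z ≠ 0) S v ⊆ {t₁, t₂} := by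
      rcases (nb (fun x z => τ x z ≠ 0) S v).eq_empty_or_nonempty with h0 | ⟨t₁, h1⟩
      · exact ⟨v, v, by simp [h0]⟩
      · have h3 := Finset.card_erase_of_mem h1
        obtain ⟨t₂, h4⟩ : ∃ t₂, (nb (fun x z => τ x z ≠ 0) S v).erase t₁ ⊆ {t₂} := by
          have h5 : ((nb (fun x z => τ x z ≠ 0) S v).erase t₁).card ≤ 1 := by omega
          have : Nonempty V := ⟨v⟩
          exact Finset.card_le_one_iff_subset_singleton.1 h5
        exact ⟨t₁, t₂, by rw [← Finset.insert_erase h1]; exact Finset.insert_subset_insert _ h4⟩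
    refine hs.extend h.antisymm (y t₁) t₂ fun x hx hvx => ?_
    have h1 := ht (mem_nb.2 ⟨hx, hvx⟩)
    rw [Finset.mem_insert, Finset.mem_singleton] at h1
    exact h1.imp_left (congrArg y)
  rcases S.eq_empty_or_nonempty with rfl | ⟨u, hu⟩
  · exact ⟨fun _ => 1, fun _ => 0, fun _ => .inl rfl, fun u hu => absurd hu (by simp)⟩
  obtain ⟨v, hv, hvpq, hv3⟩ := h.exists_degree_three
    ((hdeg u hu).trans (Finset.card_le_card (nb_subset _ _))) hdeg
  obtain ⟨a, b, c, hab, hac, hbc, habc⟩ := Finset.card_eq_three.1 hv3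
  have hN' : ∀ x, x ∈ S ∧ τ v x ≠ 0 ↔ x = a ∨ x = b ∨ x = c := fun x => by
    rw [← mem_nb (r := fun x z => τ x z ≠ 0), habc]; simp
  obtain ⟨ha, hva⟩ := (hN' a).2 (by simp)
  obtain ⟨hb, hvb⟩ := (hN' b).2 (by simp)
  obtain ⟨hc, hvc⟩ := (hN' c).2 (by simp)
  have hN : ∀ x ∈ S, τ v x ≠ 0 → x = a ∨ x = b ∨ x = c := fun x hx hvx => (hN' x).1 ⟨hx, hvx⟩
  have hN₂ : ∀ x ∈ S, τ v x ≠ 0 → x = a ∨ x = c ∨ x = b := fun x hx hvx =>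
    (hN x hx hvx).imp_right Or.symm
  by_cases he : s(a, b) = s(p, q)
  · -- a cycle through the ends `a, b` of the exceptional edge would have `a` adjacent to itself
    have he' : s(a, c) ≠ s(p, q) := fun e => by
      rcases Sym2.eq_iff.1 (he.trans e.symm) with ⟨-, h1⟩ | ⟨h1, -⟩
      · exact hbc h1
      · exact hac h1
    refine (h.step IH hdeg hv hvpq hN₂ ha hc hb hva hvc hvb hac hab hbc.symm he').resolve_right ?_
    rintro ⟨w₁, w₂, -, -, -, -, -, h1, -, h2, -, h3⟩
    rcases Sym2.eq_iff.1 (he.trans h3.symm) with ⟨rfl, -⟩ | ⟨rfl, -⟩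
    · exact h1 (h.self _)
    · exact h2 (h.self _)
  · refine (h.step IH hdeg hv hvpq hN ha hb hc hva hvb hvc hab hac hbc he).elim id ?_
    rintro ⟨w₁, w₂, hw₁, hw₂, hvw₁, hvw₂, hw, h1, h2, h3, h4, h5⟩
    have he' : s(a, c) ≠ s(p, q) := fun e => by
      rcases Sym2.eq_iff.1 (e.trans h5.symm) with ⟨rfl, -⟩ | ⟨rfl, -⟩
      · exact h1 (h.self _)
      · exact h3 (h.self _)
    refine (h.step IH hdeg hv hvpq hN₂ ha hc hb hva hvc hvb hac hab hbc.symm he').resolve_right ?_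
    rintro ⟨w₁', w₂', -, -, -, -, -, -, h6, -, h7, h8⟩
    -- both ends of the exceptional edge are adjacent to `a, b, c`, as is `v`
    have hcw : τ c w₁ ≠ 0 ∧ τ c w₂ ≠ 0 := by
      rcases Sym2.eq_iff.1 (h5.trans h8.symm) with ⟨rfl, rfl⟩ | ⟨rfl, rfl⟩
      · exact ⟨h6, h7⟩
      · exact ⟨h7, h6⟩
    refine h.noMinor (hasK33_of_singletons (x := ![v, w₁, w₂]) (z := ![a, b, c]) ?_ ?_ ?_ ?_ ?_ ?_)
    · intro i; fin_cases i <;> assumption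
    · intro i; fin_cases i <;> assumption
    · intro i j; fin_cases i <;> fin_cases j <;>
        simp [hvw₁, hvw₂, hw, hvw₁.symm, hvw₂.symm, hw.symm]
    · intro i j; fin_cases i <;> fin_cases j <;>
        simp [hab, hac, hbc, hab.symm, hac.symm, hbc.symm]
    · intro i j; fin_cases i <;> fin_cases j <;>
        first | assumption | (apply h.symm; first | assumption | exact hcw.1 | exact hcw.2)
    · exact fun x => not_not.2 (h.self x)

end Pushing

/-! ### From heights to circular colorings -/

section Coloring

open scoped Classical

variable {V : Type*}

/-- The sign of an edge as a real number. -/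
noncomputable def sgn (σ : Sym2 V → Bool) (u v : V) : ℝ := if σ s(u, v) then 1 else -1

lemma sgn_ne_zero (σ : Sym2 V → Bool) (u v : V) : sgn σ u v ≠ 0 := by
  unfold sgn; split_ifs <;> norm_num

lemma exists_heights [Fintype V] {G : SimpleGraph V} (σ : Sym2 V → Bool) {A : Set V}
    (hA : ∀ u v, G.Adj u v → (u ∈ A ↔ v ∉ A)) (hG : IsPlanar G) :
    ∃ s y : V → ℝ, (∀ x, s x = 1 ∨ s x = -1) ∧ ∀ u v, G.Adj u v → u ∈ A → v ∉ A →
      0 < sgn σ u v * (s u * s v) * (y v - y u) := by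
  rcases isEmpty_or_nonempty V with hV | ⟨⟨p⟩⟩
  · exact ⟨fun _ => 1, fun _ => 0, fun _ => .inl rfl, fun u => hV.elim u⟩
  let τ : V → V → ℝ := fun u v => if G.Adj u v then if u ∈ A then sgn σ u v else -sgn σ u v else 0
  have hτ : ∀ u v, τ u v ≠ 0 → G.Adj u v := fun u v h => by
    by_contra h'; exact h (if_neg h')
  have hgood : Good (fun x => decide (x ∈ A)) Finset.univ τ p p := by
    refine ⟨fun x z => ?_, fun x _ z _ hxz => .inl ?_, fun hK => not_hasK33_of_isPlanar hG ?_⟩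
    · have e : sgn σ z x = sgn σ x z := by unfold sgn; rw [Sym2.eq_swap]
      by_cases h : G.Adj x z
      · have h' := hA x z h
        simp only [τ, if_pos h, if_pos h.symm, e]
        by_cases hx : x ∈ A
        · rw [if_pos hx, if_neg (h'.1 hx)]
        · rw [if_neg hx, if_pos (by tauto), neg_neg]
      · simp only [τ, if_neg h, if_neg fun h1 : G.Adj z x => h h1.symm, neg_zero]
    · have := hA x z (hτ x z hxz)
      simp only [ne_eq, decide_eq_decide]
      tauto
    · exact hK.mono (Set.subset_univ _) fun x _ z _ h => hτ x z h
  obtain ⟨s, y, h⟩ := Good.exists_sol _ _ τ p p (Nat.lt_succ_self _) hgood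
  refine ⟨s, y, h.1, fun u v huv hu _ => ?_⟩
  have e : τ u v = sgn σ u v := by simp only [τ, if_pos huv, if_pos hu]
  have := h.2 u (Finset.mem_univ u) v (Finset.mem_univ v) (by rw [e]; exact sgn_ne_zero σ u v)
  rwa [e] at this

/-- The pair of antipodal points of the circle of length `r` used for the class of `u`, chosen
according to the sign `t`: `0, r/2` for one class and `r/4, 3r/4` for the other. -/
noncomputable def base (r : ℝ) (inA : Prop) (t : ℝ) : ℝ :=
  if inA then (if t = 1 then 0 else r / 2) else (if t = 1 then r / 4 else 3 * r / 4)

/-- Starting from the circular `4`-coloring that uses the points `0, 1, 2, 3`, shrink the circle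
by `ε` and push every vertex forward by a small amount increasing with its height. -/
lemma hasCircularColoring [Fintype V] {G : SimpleGraph V} (σ : Sym2 V → Bool) {A : Set V}
    (hA : ∀ u v, G.Adj u v → (u ∈ A ↔ v ∉ A)) (hG : IsPlanar G) :
    ∃ ε : ℝ, 0 < ε ∧ ε ≤ 1 ∧ HasCircularColoring G σ (4 - ε) := by
  obtain ⟨s, y, hs, hy⟩ := exists_heights σ hA hG
  let δ : V → ℝ := fun x => 1 / 4 + Real.arctan (y x) / (2 * Real.pi)
  have hδ : ∀ x, 0 < δ x ∧ δ x < 1 / 2 := fun x => by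
    have hpi := Real.pi_pos
    have h1 : -(1 / 4) < Real.arctan (y x) / (2 * Real.pi) := by
      rw [lt_div_iff₀ (by positivity)]
      linarith [Real.neg_pi_div_two_lt_arctan (y x)]
    have h2 : Real.arctan (y x) / (2 * Real.pi) < 1 / 4 := by
      rw [div_lt_iff₀ (by positivity)]
      linarith [Real.arctan_lt_pi_div_two (y x)]
    constructor <;> simp only [δ] <;> linarith
  have hδlt : ∀ {x z}, y x < y z → δ x < δ z := fun h => by
    have := div_lt_div_of_pos_right (Real.arctan_strictMono h)
      (show 0 < 2 * Real.pi by linarith [Real.pi_pos])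
    simp only [δ]; linarith
  have hpos : ∀ u v, G.Adj u v → u ∈ A → v ∉ A →
      0 < sgn σ u v * (s u * s v) * (δ v - δ u) := by
    intro u v huv hu hv
    rcases pos_and_pos_or_neg_and_neg_of_mul_pos (hy u v huv hu hv) with ⟨h1, h2⟩ | ⟨h1, h2⟩
    · exact mul_pos h1 (sub_pos.2 (hδlt (sub_pos.1 h2)))
    · exact mul_pos_of_neg_of_neg h1 (sub_neg.2 (hδlt (sub_neg.1 h2)))
  obtain ⟨ε, hε, hε1, hε0⟩ : ∃ ε : ℝ, (∀ u v, G.Adj u v → u ∈ A → v ∉ A →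
      ε < 4 * (sgn σ u v * (s u * s v) * (δ v - δ u))) ∧ ε < 1 ∧ 0 < ε := by
    have h1 : ∀ᶠ ε in nhdsWithin (0 : ℝ) (Set.Ioi 0), ∀ u v, G.Adj u v → u ∈ A → v ∉ A →
        ε < 4 * (sgn σ u v * (s u * s v) * (δ v - δ u)) := by
      rw [Filter.eventually_all]; intro u
      rw [Filter.eventually_all]; intro v
      by_cases h : G.Adj u v ∧ u ∈ A ∧ v ∉ A
      · have := hpos u v h.1 h.2.1 h.2.2
        filter_upwards [nhdsWithin_le_nhds (gt_mem_nhds (show 0 < 4 * (sgn σ u v * (s u * s v) *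
          (δ v - δ u)) by linarith))] with ε hε _ _ _ using hε
      · exact Filter.Eventually.of_forall fun _ h1 h2 h3 => absurd ⟨h1, h2, h3⟩ h
    have h2 : ∀ᶠ ε in nhdsWithin (0 : ℝ) (Set.Ioi 0), ε < 1 :=
      nhdsWithin_le_nhds (gt_mem_nhds one_pos)
    obtain ⟨ε, h3, h4, h5⟩ := (h1.and (h2.and self_mem_nhdsWithin)).exists
    exact ⟨ε, h3, h4, h5⟩
  refine ⟨ε, hε0, hε1.le, fun x => base (4 - ε) (x ∈ A) (s x) + δ x, fun x => ?_, ?_⟩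
  · have := hδ x
    dsimp only [base]
    split_ifs <;> constructor <;> linarith
  -- both conditions are symmetric, so the first end may be assumed to lie in `A`
  have main : ∀ u v, G.Adj u v → u ∈ A → v ∉ A →
      (if σ s(u, v) then
        1 ≤ |base (4 - ε) (u ∈ A) (s u) + δ u - (base (4 - ε) (v ∈ A) (s v) + δ v)| ∧
        |base (4 - ε) (u ∈ A) (s u) + δ u - (base (4 - ε) (v ∈ A) (s v) + δ v)| ≤ 4 - ε - 1
      else |base (4 - ε) (u ∈ A) (s u) + δ u - (base (4 - ε) (v ∈ A) (s v) + δ v)| ≤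
          (4 - ε) / 2 - 1 ∨ (4 - ε) / 2 + 1 ≤
          |base (4 - ε) (u ∈ A) (s u) + δ u - (base (4 - ε) (v ∈ A) (s v) + δ v)|) := by
    intro u v huv hu hv
    have h1 := hε u v huv hu hv
    obtain ⟨d1, d2⟩ := hδ u
    obtain ⟨d3, d4⟩ := hδ v
    have hne : (-1 : ℝ) ≠ 1 := by norm_num
    unfold base sgn at *
    simp only [if_pos hu, if_neg hv]
    rcases hs u with e1 | e1 <;> rcases hs v with e2 | e2 <;>
      simp only [e1, e2, if_true, if_neg hne] at h1 ⊢
    · rw [abs_of_nonpos (by linarith)]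
      split_ifs at h1 ⊢
      · constructor <;> linarith
      · left; linarith
    · rw [abs_of_nonpos (by linarith)]
      split_ifs at h1 ⊢
      · constructor <;> linarith
      · right; linarith
    · rw [abs_of_nonneg (by linarith)]
      split_ifs at h1 ⊢
      · constructor <;> linarith
      · left; linarith
    · rw [abs_of_nonpos (by linarith)]
      split_ifs at h1 ⊢
      · constructor <;> linarith
      · left; linarith
  intro u v huv
  by_cases hu : u ∈ A
  · exact main u v huv hu ((hA u v huv).1 hu)
  · have hv : v ∈ A := by have := hA u v huv; tauto
    have := main v u huv.symm hv hu
    rwa [Sym2.eq_swap, abs_sub_comm] at this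

end Coloring

end PushProof

/-- Every signed bipartite planar simple graph has circular chromatic number strictly
less than 4: there is an `ε > 0` such that it admits a circular `(4 - ε)`-coloring. -/
theorem circChrom_lt_four_of_bipartite_planar
    {V : Type*} [Fintype V] (G : SimpleGraph V) (σ : Sym2 V → Bool)
    (hbip : IsBipartiteGraph G) (hplanar : IsPlanar G) :
    (∃ ε : ℝ, 0 < ε ∧ HasCircularColoring G σ (4 - ε)) ∧ circChrom G σ < 4 := by
  obtain ⟨A, hA⟩ := hbip
  obtain ⟨ε, hε, hε1, h⟩ := PushProof.hasCircularColoring σ hA hplanar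
  refine ⟨⟨ε, hε, h⟩, ?_⟩
  have h1 : circChrom G σ ≤ ENNReal.ofReal (4 - ε) :=
    sInf_le ⟨4 - ε, ⟨by linarith, h⟩, rfl⟩
  refine h1.trans_lt ?_
  rw [show (4 : ℝ≥0∞) = ENNReal.ofReal 4 by simp]
  exact (ENNReal.ofReal_lt_ofReal_iff (by norm_num)).2 (by linarith)
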